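/- arXiv:2307.07271 — 2 statements merged into one kernel-verified Lean document; each statement's English description precedes it below -/
import Mathlib

section
/- Let G be an n-vertex simple graph with degree sequence d₁, …, d_n, average degree d̄ = (1/n)·Σ d_i ≥ 1, and maximum degree Δ satisfying 1 ≤ Δ⁹ < n/6. Then q*(G) ≥ (c/n)·Σ_{i=1}^n √(d_i)/d̄ − Δ²⁰/(2·(n·d̄)²), where c = 3/(8√2). -/
/-!
The bound comes from a random bipartition obtained by rounding Gaussians. Write `D = ∑ d_v = n dbar`.
Give every vertex `v` the vector with entry `1` at `v` and `1 / √d_v` at its neighbours, scaled by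
`1 / √2` to a unit vector, and put `v` on the side given by the sign of the inner product of this
vector with a standard Gaussian vector indexed by the vertices.

* Two signs coming from unit vectors with inner product `ρ ≥ 0` have expected product at least
  `2 ρ / π` (`le_integral_sgnPM_pi`), and exactly `0` if `ρ = 0` (`integral_sgnPM_pi_eq_zero`).
* Along an edge `uv` one has `ρ ≥ (1 / √d_u + 1 / √d_v) / 2` (`le_sum_coef_mul`). Summing over the
  edges gives a gain of `(∑ √d_v) / (π D)` in expected modularity.
* The degree tax of a pair `u, v` has mean zero unless the closed neighbourhoods of `u` and `v` meet,
  so its total expectation is at most `Δ (Δ + 1)² / (2 D)` (`sum_degree_mul_nearCount`).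

Hence `q*(G) ≥ (∑ √d_v) / (π D) - Δ (Δ + 1)² / (2 D)` (`modularity_ge_rounding`). Since `1 / π` exceeds
`3 / (8 √2)` and `∑ √d_v ≥ D / Δ > 6 Δ⁸`, the error is absorbed by the main term when `Δ ≥ 2`. When
`Δ = 1` the graph is a matching with isolated vertices, and the partition into components has score
`1 - 2 / D` (`modularity_ge_of_maxDegree_eq_one`).
-/

open Finset

/-- Number of edges of `G` with both endpoints in `A` (ordered pairs divided by two). -/
noncomputable def edgeCount {V : Type*} [Fintype V] [DecidableEq V]
    (G : SimpleGraph V) [DecidableRel G.Adj] (A : Finset V) : ℝ :=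
  ((Finset.univ.filter (fun p : V × V => G.Adj p.1 p.2 ∧ p.1 ∈ A ∧ p.2 ∈ A)).card : ℝ) / 2

/-- The volume of a vertex set: the sum of the degrees of its vertices. -/
noncomputable def vol {V : Type*} [Fintype V] [DecidableEq V]
    (G : SimpleGraph V) [DecidableRel G.Adj] (A : Finset V) : ℝ :=
  ∑ v ∈ A, (G.degree v : ℝ)

/-- The modularity score of a vertex partition. -/
noncomputable def modularityScore {V : Type*} [Fintype V] [DecidableEq V]
    (G : SimpleGraph V) [DecidableRel G.Adj]
    (P : Finpartition (Finset.univ : Finset V)) : ℝ :=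
  ∑ A ∈ P.parts,
    (edgeCount G A / (G.edgeFinset.card : ℝ)
      - (vol G A / (2 * (G.edgeFinset.card : ℝ))) ^ 2)

/-- The modularity of a graph: the maximum modularity score over all vertex partitions. -/
noncomputable def modularity {V : Type*} [Fintype V] [DecidableEq V]
    (G : SimpleGraph V) [DecidableRel G.Adj] : ℝ :=
  ⨆ P : Finpartition (Finset.univ : Finset V), modularityScore G P

section Rounding

open MeasureTheory ProbabilityTheory

/-! ### Signs of correlated Gaussians -/

/-- The sign of a real number with the convention that the sign of `0` is `1`, so that the value
is always `1` or `-1`. -/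
noncomputable def sgnPM (y : ℝ) : ℝ := if 0 ≤ y then 1 else -1

/-- The standard Gaussian measure on `ℝ`. -/
noncomputable abbrev stdG : Measure ℝ := gaussianReal 0 1

lemma measurable_sgnPM : Measurable sgnPM :=
  Measurable.ite measurableSet_Ici measurable_const measurable_const

lemma sgnPM_mul_self (y : ℝ) : sgnPM y * sgnPM y = 1 := by
  unfold sgnPM; split_ifs <;> norm_num

lemma abs_sgnPM (y : ℝ) : |sgnPM y| = 1 := by
  unfold sgnPM; split_ifs <;> norm_num

lemma sgnPM_mul_eq_abs (y : ℝ) : sgnPM y * y = |y| := by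
  unfold sgnPM; split_ifs with h
  · rw [abs_of_nonneg h, one_mul]
  · rw [abs_of_neg (not_le.1 h)]; ring

lemma integral_abs_stdG : ∫ y, |y| ∂stdG = √(2 / Real.pi) := by
  rw [integral_gaussianReal_eq_integral_smul one_ne_zero]
  have h1 : ∀ x : ℝ, gaussianPDFReal 0 1 x • |x|
      = (fun y : ℝ => (√(2 * Real.pi))⁻¹ * (y ^ (1:ℝ) * Real.exp (-(1/2) * y ^ (2:ℝ)))) |x| := by
    intro x
    simp [gaussianPDFReal]
    ring_nf
  simp_rw [h1]
  rw [integral_comp_abs (f := fun y : ℝ => (√(2 * Real.pi))⁻¹ * (y ^ (1:ℝ) * Real.exp (-(1/2) * y ^ (2:ℝ))))]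
  rw [integral_const_mul, integral_rpow_mul_exp_neg_mul_rpow (by norm_num) (by norm_num) (by norm_num)]
  norm_num
  have hpi : 0 < √Real.pi := by positivity
  have h2 : 0 < √(2:ℝ) := by positivity
  field_simp
  norm_num

lemma integral_sgnPM_stdG : ∫ y, sgnPM y ∂stdG = 0 := by
  have h1 : ∫ y, sgnPM y ∂stdG = ∫ y, sgnPM (-y) ∂stdG := by
    have := gaussianReal_map_neg (μ := 0) (v := 1)
    rw [neg_zero] at this
    conv_lhs => rw [stdG, ← this]
    rw [integral_map (by fun_prop) measurable_sgnPM.aestronglyMeasurable]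
  have h2 : ∫ y, sgnPM (-y) ∂stdG = ∫ y, - sgnPM y ∂stdG := by
    have := nullSingletonClass_gaussianReal (μ := 0) (v := 1) one_ne_zero
    apply integral_congr_ae
    have h0 : ∀ᵐ y ∂stdG, y ≠ 0 := by
      rw [ae_iff]; simp
    filter_upwards [h0] with y hy
    unfold sgnPM
    rcases lt_or_gt_of_ne hy with h | h
    · rw [if_pos (by linarith), if_neg (by linarith)]; norm_num
    · rw [if_neg (by linarith), if_pos (by linarith)]
  rw [h2, integral_neg] at h1
  linarith

/-- Two pairs of real random variables have the same joint law as soon as their joint characteristic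
functions agree. -/
lemma map_pair_eq {Ω Ω' : Type*} [MeasurableSpace Ω] [MeasurableSpace Ω']
    {P : Measure Ω} {Q : Measure Ω'} [IsProbabilityMeasure P] [IsProbabilityMeasure Q]
    {X Y : Ω → ℝ} {X' Y' : Ω' → ℝ} (hX : Measurable X) (hY : Measurable Y)
    (hX' : Measurable X') (hY' : Measurable Y')
    (h : ∀ s t : ℝ, ∫ ω, Complex.exp (((s * X ω + t * Y ω : ℝ) : ℂ) * Complex.I) ∂P
      = ∫ ω, Complex.exp (((s * X' ω + t * Y' ω : ℝ) : ℂ) * Complex.I) ∂Q) :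
    P.map (fun ω => (X ω, Y ω)) = Q.map (fun ω => (X' ω, Y' ω)) := by
  have : IsProbabilityMeasure (P.map (fun ω => (X ω, Y ω))) :=
    Measure.isProbabilityMeasure_map (by fun_prop)
  have : IsProbabilityMeasure (Q.map (fun ω => (X' ω, Y' ω))) :=
    Measure.isProbabilityMeasure_map (by fun_prop)
  apply Measure.ext_of_charFunDual
  ext L
  rw [charFunDual_apply, charFunDual_apply, integral_map (by fun_prop) (by fun_prop),
    integral_map (by fun_prop) (by fun_prop)]
  obtain ⟨s, t, hL⟩ : ∃ s t : ℝ, ∀ x y : ℝ, L (x, y) = s * x + t * y := by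
    refine ⟨L (1, 0), L (0, 1), fun x y => ?_⟩
    have : (x, y) = x • ((1 : ℝ), (0 : ℝ)) + y • ((0 : ℝ), (1 : ℝ)) := by
      simp only [Prod.smul_mk, Prod.mk_add_mk, smul_eq_mul, mul_one, mul_zero, add_zero, zero_add]
    rw [this, map_add, map_smul, map_smul, smul_eq_mul, smul_eq_mul, mul_comm x, mul_comm y]
  simp_rw [hL]
  exact h s t

lemma integral_exp_stdG (t : ℝ) :
    ∫ x, Complex.exp (((t * x : ℝ) : ℂ) * Complex.I) ∂stdG
      = Complex.exp ((-(t ^ 2) / 2 : ℝ) : ℂ) := by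
  have := charFun_gaussianReal (μ := 0) (v := 1) t
  rw [charFun_apply_real] at this
  push_cast at this ⊢
  rw [this]
  congr 1
  simp
  ring

/-- The characteristic function of the linear form `∑ i, c i * x i` in independent standard
Gaussians. -/
lemma integral_exp_pi {ι : Type*} [Fintype ι] (c : ι → ℝ) :
    ∫ x : ι → ℝ, Complex.exp (((∑ i, c i * x i : ℝ) : ℂ) * Complex.I) ∂(Measure.pi fun _ => stdG)
      = Complex.exp ((-(∑ i, c i ^ 2) / 2 : ℝ) : ℂ) := by
  have h : ∀ x : ι → ℝ, Complex.exp (((∑ i, c i * x i : ℝ) : ℂ) * Complex.I)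
      = ∏ i, Complex.exp (((c i * x i : ℝ) : ℂ) * Complex.I) := by
    intro x
    rw [← Complex.exp_sum]; push_cast; rw [Finset.sum_mul]
  simp_rw [h]
  rw [integral_fintype_prod_eq_prod
    (f := fun i (y : ℝ) => Complex.exp (((c i * y : ℝ) : ℂ) * Complex.I))]
  simp_rw [integral_exp_stdG]
  rw [← Complex.exp_sum]
  congr 1
  push_cast
  rw [← Finset.sum_div, Finset.sum_neg_distrib]

lemma integral_exp_prod (a b : ℝ) :
    ∫ p : ℝ × ℝ, Complex.exp (((a * p.1 + b * p.2 : ℝ) : ℂ) * Complex.I) ∂(stdG.prod stdG)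
      = Complex.exp ((-(a ^ 2 + b ^ 2) / 2 : ℝ) : ℂ) := by
  have h : ∀ p : ℝ × ℝ, Complex.exp (((a * p.1 + b * p.2 : ℝ) : ℂ) * Complex.I)
      = Complex.exp (((a * p.1 : ℝ) : ℂ) * Complex.I)
        * Complex.exp (((b * p.2 : ℝ) : ℂ) * Complex.I) := by
    intro p
    rw [← Complex.exp_add]; push_cast; ring_nf
  simp_rw [h]
  rw [integral_prod_mul (fun x : ℝ => Complex.exp (((a * x : ℝ) : ℂ) * Complex.I))
    (fun x : ℝ => Complex.exp (((b * x : ℝ) : ℂ) * Complex.I)), integral_exp_stdG,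
    integral_exp_stdG, ← Complex.exp_add]
  congr 1; push_cast; ring

lemma integral_exp_prod₃ (a b c : ℝ) :
    ∫ p : ℝ × ℝ × ℝ, Complex.exp (((a * p.1 + (b * p.2.1 + c * p.2.2) : ℝ) : ℂ) * Complex.I)
        ∂(stdG.prod (stdG.prod stdG))
      = Complex.exp ((-(a ^ 2 + (b ^ 2 + c ^ 2)) / 2 : ℝ) : ℂ) := by
  have h : ∀ p : ℝ × ℝ × ℝ,
      Complex.exp (((a * p.1 + (b * p.2.1 + c * p.2.2) : ℝ) : ℂ) * Complex.I)
      = Complex.exp (((a * p.1 : ℝ) : ℂ) * Complex.I)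
        * Complex.exp (((b * p.2.1 + c * p.2.2 : ℝ) : ℂ) * Complex.I) := by
    intro p
    rw [← Complex.exp_add]; push_cast; ring_nf
  simp_rw [h]
  rw [integral_prod_mul (fun x : ℝ => Complex.exp (((a * x : ℝ) : ℂ) * Complex.I))
    (fun p : ℝ × ℝ => Complex.exp (((b * p.1 + c * p.2 : ℝ) : ℂ) * Complex.I)),
    integral_exp_stdG, integral_exp_prod, ← Complex.exp_add]
  congr 1; push_cast; ring

lemma integrable_id_stdG : Integrable (fun y : ℝ => y) stdG :=
  memLp_one_iff_integrable.1 (memLp_id_gaussianReal 1)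

lemma integrable_sq_stdG : Integrable (fun y : ℝ => y ^ 2) stdG :=
  (memLp_id_gaussianReal (μ := 0) (v := 1) 2).integrable_sq

lemma integral_sq_stdG : ∫ y, y ^ 2 ∂stdG = 1 := by
  have h := variance_id_gaussianReal (μ := 0) (v := 1)
  rw [variance_of_integral_eq_zero (by fun_prop) (by simp)] at h
  simpa using h

/-- `E[sgn(r W + q Z) W] = r E|W|` for independent standard Gaussians `W`, `Z`. The pairs
`(r W + q Z, W)` and `(W, r W + q Z)` have the same law, and
`sgn(W) (r W + q Z) = r |W| + q sgn(W) Z`, whose second term has mean zero. -/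
lemma integral_mul_sgnPM {r q : ℝ} (h : r ^ 2 + q ^ 2 = 1) :
    ∫ p : ℝ × ℝ, sgnPM (r * p.1 + q * p.2) * p.1 ∂(stdG.prod stdG) = r * √(2 / Real.pi) := by
  have hlaw := map_pair_eq (P := stdG.prod stdG) (Q := stdG.prod stdG)
    (X := fun p : ℝ × ℝ => r * p.1 + q * p.2) (Y := fun p => p.1)
    (X' := fun p : ℝ × ℝ => p.1) (Y' := fun p => r * p.1 + q * p.2)
    (by fun_prop) (by fun_prop) (by fun_prop) (by fun_prop) (by
      intro s t
      have e1 := integral_exp_prod (s * r + t) (s * q)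
      have e2 := integral_exp_prod (s + t * r) (t * q)
      have : (s * r + t) ^ 2 + (s * q) ^ 2 = (s + t * r) ^ 2 + (t * q) ^ 2 := by
        linear_combination (s ^ 2 - t ^ 2) * h
      rw [this, ← e2] at e1
      convert e1 using 6 <;> ring)
  have hm : AEStronglyMeasurable (fun p : ℝ × ℝ => sgnPM p.1 * p.2)
      ((stdG.prod stdG).map fun p : ℝ × ℝ => (r * p.1 + q * p.2, p.1)) :=
    ((measurable_sgnPM.comp measurable_fst).mul measurable_snd).aestronglyMeasurable
  have hm' := hm
  rw [hlaw] at hm'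
  have key := integral_map (μ := stdG.prod stdG)
    (φ := fun p : ℝ × ℝ => (r * p.1 + q * p.2, p.1)) (by fun_prop) hm
  have key' := integral_map (μ := stdG.prod stdG)
    (φ := fun p : ℝ × ℝ => (p.1, r * p.1 + q * p.2)) (by fun_prop) hm'
  rw [← hlaw, key] at key'
  simp only at key'
  rw [key']
  have e : ∀ p : ℝ × ℝ, sgnPM p.1 * (r * p.1 + q * p.2)
      = (r * |p.1|) * 1 + sgnPM p.1 * (q * p.2) := by
    intro p; rw [← sgnPM_mul_eq_abs]; ring
  simp_rw [e]
  have hi : Integrable sgnPM stdG :=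
    Integrable.of_bound measurable_sgnPM.aestronglyMeasurable 1
      (Filter.Eventually.of_forall fun y => by rw [Real.norm_eq_abs, abs_sgnPM])
  rw [integral_add
    (Integrable.mul_prod (integrable_id_stdG.abs.const_mul r) (integrable_const (1:ℝ)))
    (Integrable.mul_prod hi (integrable_id_stdG.const_mul q)),
    integral_prod_mul (fun y : ℝ => r * |y|) (fun _ => (1 : ℝ)),
    integral_prod_mul sgnPM (fun y : ℝ => q * y), integral_sgnPM_stdG, integral_const_mul,
    integral_abs_stdG]
  simp

/-- For independent standard Gaussians `W`, `Z`, `Z'` the signs of `r W + q Z` and `r W + q Z'` are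
independent given `W`, so the expected product of signs is `E[g(W)²]`, where `g(w)` is the conditional
mean of one sign. Cauchy–Schwarz against `W` gives `E[g(W)²] ≥ E[g(W) W]² = r² · 2/π`. -/
lemma le_integral_sgnPM_triple {r q : ℝ} (h : r ^ 2 + q ^ 2 = 1) :
    2 / Real.pi * r ^ 2 ≤ ∫ p : ℝ × ℝ × ℝ,
      sgnPM (r * p.1 + q * p.2.1) * sgnPM (r * p.1 + q * p.2.2)
        ∂(stdG.prod (stdG.prod stdG)) := by
  set g : ℝ → ℝ := fun w => ∫ z, sgnPM (r * w + q * z) ∂stdG with hg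
  have hmF : Measurable (fun p : ℝ × ℝ => sgnPM (r * p.1 + q * p.2)) :=
    measurable_sgnPM.comp (by fun_prop)
  have hgm : StronglyMeasurable g :=
    StronglyMeasurable.integral_prod_right (f := fun w z => sgnPM (r * w + q * z))
      hmF.stronglyMeasurable
  have hgb : ∀ w, ‖g w‖ ≤ 1 := by
    intro w
    refine (norm_integral_le_of_norm_le_const (C := 1)
      (Filter.Eventually.of_forall fun z => ?_)).trans (by simp)
    rw [Real.norm_eq_abs, abs_sgnPM]
  have hE : ∫ p : ℝ × ℝ × ℝ,
      sgnPM (r * p.1 + q * p.2.1) * sgnPM (r * p.1 + q * p.2.2)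
        ∂(stdG.prod (stdG.prod stdG)) = ∫ w, g w ^ 2 ∂stdG := by
    rw [integral_prod]
    · congr 1; ext w
      rw [integral_prod_mul (fun z => sgnPM (r * w + q * z)) (fun z => sgnPM (r * w + q * z))]
      rw [hg]; ring
    · refine Integrable.of_bound (Measurable.aestronglyMeasurable ?_) 1
        (Filter.Eventually.of_forall fun y => ?_)
      · exact (measurable_sgnPM.comp (by fun_prop)).mul (measurable_sgnPM.comp (by fun_prop))
      · rw [Real.norm_eq_abs, abs_mul, abs_sgnPM, abs_sgnPM, one_mul]
  have hgw : ∫ w, g w * w ∂stdG = r * √(2 / Real.pi) := by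
    rw [← integral_mul_sgnPM h, integral_prod]
    · congr 1; ext w; rw [integral_mul_const]
    · have : Integrable (fun p : ℝ × ℝ => p.1) (stdG.prod stdG) :=
        integrable_id_stdG.comp_fst _
      refine this.bdd_mul (c := 1) hmF.aestronglyMeasurable
        (Filter.Eventually.of_forall fun y => ?_)
      rw [Real.norm_eq_abs, abs_sgnPM]
  have ig2 : Integrable (fun w => g w ^ 2) stdG := by
    refine Integrable.of_bound (hgm.measurable.pow_const 2).aestronglyMeasurable 1
        (Filter.Eventually.of_forall fun y => ?_)
    rw [norm_pow]; exact pow_le_one₀ (norm_nonneg _) (hgb y)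
  have igw : Integrable (fun w => g w * w) stdG :=
    integrable_id_stdG.bdd_mul (c := 1) hgm.aestronglyMeasurable
        (Filter.Eventually.of_forall hgb)
  -- Cauchy–Schwarz for `g` and the identity, as nonnegativity of `E[(g(W) - κ W)²]`, `κ = E[g(W) W]`.
  set κ := r * √(2 / Real.pi) with hκ
  have h0 : 0 ≤ ∫ w, (g w - κ * w) ^ 2 ∂stdG := integral_nonneg fun w => sq_nonneg _
  have e : ∀ w, (g w - κ * w) ^ 2 = (g w ^ 2 - 2 * κ * (g w * w)) + κ ^ 2 * w ^ 2 := by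
    intro w; ring
  simp_rw [e] at h0
  rw [integral_add (by exact ig2.sub (igw.const_mul (2 * κ))) (integrable_sq_stdG.const_mul _),
    integral_sub ig2 (igw.const_mul _), integral_const_mul, integral_const_mul, hgw,
    integral_sq_stdG] at h0
  rw [hE]
  have : κ ^ 2 = 2 / Real.pi * r ^ 2 := by
    rw [hκ, mul_pow, Real.sq_sqrt (by positivity)]; ring
  nlinarith

/-- Unit vectors `a`, `b` with inner product `r²` produce Gaussians `⟨a, x⟩`, `⟨b, x⟩` of correlation
`r²`, whose joint law is that of `r W + q Z` and `r W + q Z'`. -/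
lemma integral_sgnPM_pi {ι : Type*} [Fintype ι] {a b : ι → ℝ} {r q : ℝ} (h : r ^ 2 + q ^ 2 = 1)
    (ha : ∑ i, a i ^ 2 = 1) (hb : ∑ i, b i ^ 2 = 1) (hab : ∑ i, a i * b i = r ^ 2) :
    ∫ x : ι → ℝ, sgnPM (∑ i, a i * x i) * sgnPM (∑ i, b i * x i) ∂(Measure.pi fun _ => stdG)
      = ∫ p : ℝ × ℝ × ℝ, sgnPM (r * p.1 + q * p.2.1) * sgnPM (r * p.1 + q * p.2.2)
        ∂(stdG.prod (stdG.prod stdG)) := by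
  have hlaw := map_pair_eq (P := Measure.pi fun _ : ι => stdG)
    (Q := stdG.prod (stdG.prod stdG))
    (X := fun x => ∑ i, a i * x i) (Y := fun x => ∑ i, b i * x i)
    (X' := fun p : ℝ × ℝ × ℝ => r * p.1 + q * p.2.1) (Y' := fun p => r * p.1 + q * p.2.2)
    (by fun_prop) (by fun_prop) (by fun_prop) (by fun_prop) (by
      intro s t
      have e1 := integral_exp_pi (fun i => s * a i + t * b i)
      have e2 := integral_exp_prod₃ (s * r + t * r) (s * q) (t * q)
      have : ∑ i, (s * a i + t * b i) ^ 2
          = (s * r + t * r) ^ 2 + ((s * q) ^ 2 + (t * q) ^ 2) := by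
        have : ∑ i, (s * a i + t * b i) ^ 2
          = s ^ 2 * ∑ i, a i ^ 2 + 2 * s * t * ∑ i, a i * b i + t ^ 2 * ∑ i, b i ^ 2 := by
          rw [Finset.mul_sum, Finset.mul_sum, Finset.mul_sum, ← Finset.sum_add_distrib,
            ← Finset.sum_add_distrib]
          exact Finset.sum_congr rfl fun i _ => by ring
        rw [this, ha, hb, hab]
        linear_combination (-s ^ 2 - t ^ 2) * h
      rw [this, ← e2] at e1
      convert e1 using 5 with x
      · congr 1
        rw [Finset.mul_sum, Finset.mul_sum, ← Finset.sum_add_distrib]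
        exact Finset.sum_congr rfl fun i _ => by ring
      · congr 1
        ring)
  have hm : AEStronglyMeasurable (fun p : ℝ × ℝ => sgnPM p.1 * sgnPM p.2)
      ((Measure.pi fun _ : ι => stdG).map fun x => (∑ i, a i * x i, ∑ i, b i * x i)) :=
    ((measurable_sgnPM.comp measurable_fst).mul
      (measurable_sgnPM.comp measurable_snd)).aestronglyMeasurable
  have hm' := hm
  rw [hlaw] at hm'
  have key := integral_map (μ := Measure.pi fun _ : ι => stdG)
    (φ := fun x => (∑ i, a i * x i, ∑ i, b i * x i)) (by fun_prop) hm
  have key' := integral_map (μ := stdG.prod (stdG.prod stdG))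
    (φ := fun p : ℝ × ℝ × ℝ => (r * p.1 + q * p.2.1, r * p.1 + q * p.2.2)) (by fun_prop) hm'
  rw [← hlaw, key] at key'
  exact key'

/-- A weak form of Grothendieck's identity `E[sgn⟨a, x⟩ sgn⟨b, x⟩] = (2/π) arcsin⟨a, b⟩`, for unit
vectors with nonnegative inner product. -/
lemma le_integral_sgnPM_pi {ι : Type*} [Fintype ι] {a b : ι → ℝ}
    (ha : ∑ i, a i ^ 2 = 1) (hb : ∑ i, b i ^ 2 = 1) (hab : 0 ≤ ∑ i, a i * b i) :
    2 / Real.pi * ∑ i, a i * b i ≤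
    ∫ x : ι → ℝ, sgnPM (∑ i, a i * x i) * sgnPM (∑ i, b i * x i)
      ∂(Measure.pi fun _ => stdG) := by
  have hle : ∑ i, a i * b i ≤ 1 := by
    have : 0 ≤ ∑ i, (a i - b i) ^ 2 := Finset.sum_nonneg fun i _ => sq_nonneg _
    have e : ∑ i, (a i - b i) ^ 2
        = ∑ i, a i ^ 2 + ∑ i, b i ^ 2 - 2 * ∑ i, a i * b i := by
      rw [Finset.mul_sum, ← Finset.sum_add_distrib, ← Finset.sum_sub_distrib]
      exact Finset.sum_congr rfl fun i _ => by ring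
    linarith
  have h : √(∑ i, a i * b i) ^ 2 + √(1 - ∑ i, a i * b i) ^ 2 = 1 := by
    rw [Real.sq_sqrt hab, Real.sq_sqrt (by linarith)]; ring
  have h' := le_integral_sgnPM_triple h
  rw [← integral_sgnPM_pi h ha hb (Real.sq_sqrt hab).symm, Real.sq_sqrt hab] at h'
  exact h'

lemma integral_sgnPM_pi_eq_zero {ι : Type*} [Fintype ι] {a b : ι → ℝ}
    (ha : ∑ i, a i ^ 2 = 1) (hb : ∑ i, b i ^ 2 = 1) (hab : ∑ i, a i * b i = 0) :
    ∫ x : ι → ℝ, sgnPM (∑ i, a i * x i) * sgnPM (∑ i, b i * x i)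
      ∂(Measure.pi fun _ => stdG) = 0 := by
  rw [integral_sgnPM_pi (r := 0) (q := 1) (by norm_num) ha hb (by simpa using hab)]
  simp only [zero_mul, one_mul, zero_add]
  have h1 := integral_prod_mul (μ := stdG) (ν := stdG.prod stdG) (fun _ : ℝ => (1 : ℝ))
    (fun p : ℝ × ℝ => sgnPM p.1 * sgnPM p.2)
  rw [integral_prod_mul, integral_sgnPM_stdG] at h1
  simpa using h1

/-! ### Modularity of explicit partitions -/

/-- The score of the partition into classes of `S`, written as a sum over ordered pairs of vertices. -/
lemma modularity_ge {V : Type*} [Fintype V] [DecidableEq V] (G : SimpleGraph V)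
    [DecidableRel G.Adj] (S : Setoid V) [DecidableRel S.r] {D : ℝ}
    (hD : D = ∑ v, (G.degree v : ℝ)) :
    ∑ u, ∑ v, (if S u v then
      (if G.Adj u v then (1 : ℝ) else 0) / D - (G.degree u : ℝ) * G.degree v / D ^ 2 else 0)
      ≤ modularity G := by
  have hm : 2 * (#G.edgeFinset : ℝ) = D := by
    rw [hD]; exact_mod_cast (G.sum_degrees_eq_twice_card_edges).symm
  set P := Finpartition.ofSetoid S with hP
  refine le_trans (le_of_eq ?_) (le_ciSup (Set.finite_range _).bddAbove P)
  unfold modularityScore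
  have hpart : ∀ A ∈ P.parts, edgeCount G A / (#G.edgeFinset : ℝ)
      - (vol G A / (2 * (#G.edgeFinset : ℝ))) ^ 2
      = ∑ u ∈ A, ∑ v ∈ A,
        ((if G.Adj u v then (1 : ℝ) else 0) / D - (G.degree u : ℝ) * G.degree v / D ^ 2) := by
    intro A _
    have h1 : edgeCount G A / (#G.edgeFinset : ℝ)
        = (∑ u ∈ A, ∑ v ∈ A, (if G.Adj u v then (1 : ℝ) else 0)) / D := by
      unfold edgeCount
      have : Finset.univ.filter (fun p : V × V => G.Adj p.1 p.2 ∧ p.1 ∈ A ∧ p.2 ∈ A)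
          = (A ×ˢ A).filter (fun p : V × V => G.Adj p.1 p.2) := by
        ext p; simp; tauto
      rw [div_div, hm, this, Finset.card_filter, ← Finset.sum_product']
      push_cast
      rfl
    have h2 : (vol G A / (2 * (#G.edgeFinset : ℝ))) ^ 2
        = (∑ u ∈ A, ∑ v ∈ A, (G.degree u : ℝ) * G.degree v) / D ^ 2 := by
      unfold vol
      rw [hm, div_pow, sq, Finset.sum_mul_sum]
    rw [h1, h2, Finset.sum_div, Finset.sum_div, ← Finset.sum_sub_distrib]
    refine Finset.sum_congr rfl fun u _ => ?_
    rw [Finset.sum_div, Finset.sum_div, ← Finset.sum_sub_distrib]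
  rw [Finset.sum_congr rfl hpart]
  conv_lhs => rw [← P.biUnion_parts]
  rw [Finset.sum_biUnion P.disjoint]
  refine Finset.sum_congr rfl fun A hA => Finset.sum_congr rfl fun u hu => ?_
  rw [← Finset.sum_filter, P.biUnion_parts]
  refine Finset.sum_congr ?_ fun _ _ => rfl
  rw [← P.part_eq_of_mem hA hu]
  ext v
  rw [Finpartition.mem_part_ofSetoid_iff_rel]
  simp

/-- For a two-part partition encoded by signs `s`, a pair lies in one part with indicator
`(1 + s u * s v) / 2`, and the constant `1 / 2` contributes nothing because the modularity matrix has
zero row sums. -/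
lemma modularity_ge_sign {V : Type*} [Fintype V] [DecidableEq V] (G : SimpleGraph V)
    [DecidableRel G.Adj] {D : ℝ}
    (hD : D = ∑ v, (G.degree v : ℝ)) (hD0 : 0 < D) (s : V → ℝ) (hs : ∀ v, s v = 1 ∨ s v = -1) :
    1 / 2 * ∑ u, ∑ v, ((if G.Adj u v then (1 : ℝ) else 0) / D
      - (G.degree u : ℝ) * G.degree v / D ^ 2) * (s u * s v) ≤ modularity G := by
  classical
  have key := modularity_ge G (Setoid.ker s) hD
  have h0 : ∑ u, ∑ v, ((if G.Adj u v then (1 : ℝ) else 0) / D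
      - (G.degree u : ℝ) * G.degree v / D ^ 2) = 0 := by
    have : ∀ u, ∑ v, ((if G.Adj u v then (1 : ℝ) else 0) / D
      - (G.degree u : ℝ) * G.degree v / D ^ 2) = 0 := by
      intro u
      rw [Finset.sum_sub_distrib, ← Finset.sum_div, ← Finset.sum_div, ← Finset.mul_sum, ← hD,
        Finset.sum_boole, ← G.neighborFinset_eq_filter, G.card_neighborFinset_eq_degree]
      field_simp
      ring
    simp [this]
  refine le_trans (le_of_eq ?_) key
  calc _ = 1 / 2 * ∑ u, ∑ v, ((if G.Adj u v then (1 : ℝ) else 0) / D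
      - (G.degree u : ℝ) * G.degree v / D ^ 2) * (s u * s v) + 1 / 2 *
      ∑ u, ∑ v, ((if G.Adj u v then (1 : ℝ) else 0) / D
      - (G.degree u : ℝ) * G.degree v / D ^ 2) := by rw [h0]; ring
    _ = _ := by
      rw [← mul_add, ← Finset.sum_add_distrib, Finset.mul_sum]
      refine Finset.sum_congr rfl fun u _ => ?_
      rw [← Finset.sum_add_distrib, Finset.mul_sum]
      refine Finset.sum_congr rfl fun v _ => ?_
      rw [Setoid.ker_def]
      rcases hs u with h | h <;> rcases hs v with h' | h' <;> rw [h, h'] <;> norm_num <;> ring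

/-- A graph of maximum degree one is a matching plus isolated vertices; its components form the
partition. -/
lemma modularity_ge_of_maxDegree_eq_one {V : Type*} [Fintype V] [DecidableEq V]
    (G : SimpleGraph V) [DecidableRel G.Adj] {D : ℝ}
    (hD : D = ∑ v, (G.degree v : ℝ)) (hD0 : 0 < D) (hΔ : G.maxDegree = 1) :
    1 - 2 / D ≤ modularity G := by
  have hd : ∀ v, G.degree v ≤ 1 := fun v => hΔ ▸ G.degree_le_maxDegree v
  have huniq : ∀ {u v w}, G.Adj u v → G.Adj u w → v = w := by
    intro u v w h1 h2
    have := hd u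
    rw [← G.card_neighborFinset_eq_degree, Finset.card_le_one] at this
    exact this v (by simpa using h1) w (by simpa using h2)
  let S : Setoid V :=
    { r := fun u v => u = v ∨ G.Adj u v
      iseqv := by
        refine ⟨fun u => Or.inl rfl, ?_, ?_⟩
        · rintro u v (h | h)
          · exact Or.inl h.symm
          · exact Or.inr h.symm
        · rintro u v w (rfl | h) (rfl | h')
          · exact Or.inl rfl
          · exact Or.inr h'
          · exact Or.inr h
          · exact Or.inl (huniq h.symm h') }
  have : DecidableRel S.r := fun u v => inferInstanceAs (Decidable (u = v ∨ G.Adj u v))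
  refine le_trans ?_ (modularity_ge G S hD)
  have hterm : ∀ u v, (if G.Adj u v then (1 : ℝ) else 0) * (1 / D - 1 / D ^ 2)
      - (if u = v then (G.degree u : ℝ) else 0) / D ^ 2 ≤ (if S u v then
      (if G.Adj u v then (1 : ℝ) else 0) / D - (G.degree u : ℝ) * G.degree v / D ^ 2 else 0) := by
    intro u v
    have hS : S u v ↔ u = v ∨ G.Adj u v := Iff.rfl
    have hu : (G.degree u : ℝ) ≤ 1 := by exact_mod_cast hd u
    have hv : (G.degree v : ℝ) ≤ 1 := by exact_mod_cast hd v
    have hu0 : (0 : ℝ) ≤ G.degree u := by positivity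
    have hv0 : (0 : ℝ) ≤ G.degree v := by positivity
    by_cases huv : u = v
    · subst huv
      rw [if_pos (hS.2 (Or.inl rfl)), if_pos rfl, if_neg (G.loopless.irrefl u)]
      have : (G.degree u : ℝ) * G.degree u / D ^ 2 ≤ G.degree u / D ^ 2 := by
        gcongr; nlinarith
      simp only [zero_mul, zero_div]; linarith
    · by_cases ha : G.Adj u v
      · rw [if_pos (hS.2 (Or.inr ha)), if_neg huv, if_pos ha]
        have : (G.degree u : ℝ) * G.degree v / D ^ 2 ≤ 1 / D ^ 2 := by
          gcongr; nlinarith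
        simp only [one_mul, zero_div]; linarith
      · rw [if_neg (show ¬ S u v by rw [hS]; tauto), if_neg huv, if_neg ha]; simp
  refine le_trans (le_of_eq ?_) (Finset.sum_le_sum fun u _ => Finset.sum_le_sum fun v _ => hterm u v)
  have hin : ∀ u, ∑ v, ((if G.Adj u v then (1 : ℝ) else 0) * (1 / D - 1 / D ^ 2)
      - (if u = v then (G.degree u : ℝ) else 0) / D ^ 2)
      = G.degree u * (1 / D - 2 / D ^ 2) := by
    intro u
    rw [Finset.sum_sub_distrib, ← Finset.sum_mul, ← Finset.sum_div, Finset.sum_boole,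
      ← G.neighborFinset_eq_filter, G.card_neighborFinset_eq_degree, Finset.sum_ite_eq]
    simp only [Finset.mem_univ, if_true]
    ring
  simp_rw [hin]
  rw [← Finset.sum_mul, ← hD]
  field_simp

/-- Each edge `uv` is counted in both orders with weight `1 / √d_u + 1 / √d_v`; every vertex `v`
thus collects `2 d_v / √d_v = 2 √d_v`. -/
lemma sum_adj_mul_inv_sqrt {V : Type*} [Fintype V] (G : SimpleGraph V) [DecidableRel G.Adj] :
    ∑ u, ∑ v, (if G.Adj u v then (1 : ℝ) else 0)
      * (1 / √(G.degree u : ℝ) + 1 / √(G.degree v : ℝ)) = 2 * ∑ v, √(G.degree v : ℝ) := by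
  have h1 : ∑ u, ∑ v, (if G.Adj u v then (1 : ℝ) else 0) * (1 / √(G.degree u : ℝ))
      = ∑ v, √(G.degree v : ℝ) := by
    refine Finset.sum_congr rfl fun u _ => ?_
    rw [← Finset.sum_mul, Finset.sum_boole, ← G.neighborFinset_eq_filter,
      G.card_neighborFinset_eq_degree, mul_one_div, Real.div_sqrt]
  have h2 : ∑ u, ∑ v, (if G.Adj u v then (1 : ℝ) else 0) * (1 / √(G.degree v : ℝ))
      = ∑ v, √(G.degree v : ℝ) := by
    rw [Finset.sum_comm, ← h1]
    simp_rw [G.adj_comm]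
  simp_rw [mul_add, Finset.sum_add_distrib]
  rw [h1, h2]; ring

/-! ### Gaussian rounding of a graph -/

/-- The coefficient vector of `v`: a mass `1` at `v` and `1 / √d_v` at each neighbour, divided by `√2`.
It is a unit vector when `d_v ≥ 1`. For `d_v = 0` it is not, but then `v` does not affect any score. -/
noncomputable def coef {V : Type*} [Fintype V] [DecidableEq V] (G : SimpleGraph V)
    [DecidableRel G.Adj] (v w : V) : ℝ :=
  ((if w = v then 1 else 0) + (if G.Adj v w then 1 / √(G.degree v : ℝ) else 0)) / √2

/-- The number of vertices common to the closed neighbourhoods of `u` and `v`. -/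
def nearCount {V : Type*} [Fintype V] [DecidableEq V] (G : SimpleGraph V)
    [DecidableRel G.Adj] (u v : V) : ℕ :=
  ∑ w, (if w = u ∨ G.Adj u w then 1 else 0) * (if w = v ∨ G.Adj v w then 1 else 0)

section Coef

variable {V : Type*} [Fintype V] [DecidableEq V] (G : SimpleGraph V) [DecidableRel G.Adj]

lemma coef_nonneg (v w : V) : 0 ≤ coef G v w := by
  unfold coef; positivity

lemma sum_coef_sq {v : V} (hv : 0 < G.degree v) : ∑ w, coef G v w ^ 2 = 1 := by
  have hv' : (0 : ℝ) < G.degree v := by exact_mod_cast hv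
  have h : ∀ w, coef G v w ^ 2
      = ((if w = v then 1 else 0) + (if G.Adj v w then 1 else 0) * (1 / (G.degree v : ℝ))) / 2 := by
    intro w
    unfold coef
    rw [div_pow, Real.sq_sqrt (by norm_num)]
    congr 1
    by_cases hw : w = v
    · subst hw; simp
    · by_cases ha : G.Adj v w
      · simp [hw, ha, Real.sq_sqrt hv'.le]
      · simp [hw, ha]
  simp_rw [h]
  rw [← Finset.sum_div, Finset.sum_add_distrib, ← Finset.sum_mul, Finset.sum_ite_eq',
    Finset.sum_boole, ← G.neighborFinset_eq_filter, G.card_neighborFinset_eq_degree]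
  simp only [Finset.mem_univ, if_true]
  field_simp
  norm_num

/-- Adjacent vertices have correlated coefficient vectors: the bound comes from the coordinates `u`
and `v` alone. -/
lemma le_sum_coef_mul {u v : V} (ha : G.Adj u v) :
    1 / 2 * (1 / √(G.degree u : ℝ) + 1 / √(G.degree v : ℝ))
      ≤ ∑ w, coef G u w * coef G v w := by
  have h : ∀ w, (if w = u then 1 / 2 * (1 / √(G.degree v : ℝ)) else 0)
      + (if w = v then 1 / 2 * (1 / √(G.degree u : ℝ)) else 0) ≤ coef G u w * coef G v w := by
    intro w
    have h2 : √(2 : ℝ) * √2 = 2 := Real.mul_self_sqrt (by norm_num)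
    by_cases hu : w = u
    · subst hu
      unfold coef
      rw [if_pos rfl, if_neg ha.ne, if_pos rfl, if_neg (G.loopless.irrefl w), if_neg ha.ne,
        if_pos ha.symm, div_mul_div_comm (_ + _), h2]
      apply le_of_eq; ring
    · by_cases hv : w = v
      · subst hv
        unfold coef
        rw [if_neg hu, if_pos rfl, if_neg hu, if_pos ha, if_pos rfl,
          if_neg (G.loopless.irrefl w), div_mul_div_comm (_ + _), h2]
        apply le_of_eq; ring
      · rw [if_neg hu, if_neg hv, add_zero]
        exact mul_nonneg (coef_nonneg G u w) (coef_nonneg G v w)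
  refine le_trans (le_of_eq ?_) (Finset.sum_le_sum fun w _ => h w)
  rw [Finset.sum_add_distrib, Finset.sum_ite_eq', Finset.sum_ite_eq']
  simp only [Finset.mem_univ, if_true]
  ring

/-- Vertices with disjoint closed neighbourhoods have orthogonal coefficient vectors. -/
lemma sum_coef_mul_eq_zero {u v : V} (h : nearCount G u v = 0) :
    ∑ w, coef G u w * coef G v w = 0 := by
  refine Finset.sum_eq_zero fun w hw => ?_
  have := (Finset.sum_eq_zero_iff.1 h) w hw
  unfold coef
  rcases mul_eq_zero.1 this with h | h
  · rw [ite_eq_right_iff] at h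
    have h' : ¬ (w = u ∨ G.Adj u w) := fun hh => one_ne_zero (h hh)
    rw [not_or] at h'
    simp [h'.1, h'.2]
  · rw [ite_eq_right_iff] at h
    have h' : ¬ (w = v ∨ G.Adj v w) := fun hh => one_ne_zero (h hh)
    rw [not_or] at h'
    simp [h'.1, h'.2]

lemma sum_near (w : V) :
    ∑ v, (if w = v ∨ G.Adj v w then 1 else 0) ≤ G.maxDegree + 1 := by
  have h : ∀ v, (if w = v ∨ G.Adj v w then 1 else 0)
      ≤ (if w = v then 1 else 0) + (if G.Adj w v then 1 else 0) := by
    intro v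
    simp only [G.adj_comm v w]
    split_ifs <;> simp_all
  refine (Finset.sum_le_sum fun v _ => h v).trans ?_
  rw [Finset.sum_add_distrib, Finset.sum_ite_eq, Finset.sum_boole,
    ← G.neighborFinset_eq_filter, G.card_neighborFinset_eq_degree, if_pos (Finset.mem_univ _)]
  have := G.degree_le_maxDegree w
  simp only [Nat.cast_id]
  omega

lemma sum_nearCount (u : V) : ∑ v, nearCount G u v ≤ (G.maxDegree + 1) ^ 2 := by
  unfold nearCount
  rw [Finset.sum_comm]
  simp_rw [← Finset.mul_sum]
  refine (Finset.sum_le_sum fun w _ => Nat.mul_le_mul_left _ (sum_near G w)).trans ?_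
  rw [← Finset.sum_mul, sq]
  refine Nat.mul_le_mul_right _ ?_
  refine le_trans (le_of_eq ?_) (sum_near G u)
  refine Finset.sum_congr rfl fun w _ => ?_
  simp only [G.adj_comm u w, eq_comm (a := w)]

lemma sum_degree_mul_nearCount {D : ℝ} (hD : D = ∑ v, (G.degree v : ℝ)) :
    ∑ u, ∑ v, (G.degree u : ℝ) * G.degree v * nearCount G u v
      ≤ D * (G.maxDegree * (G.maxDegree + 1) ^ 2) := by
  rw [hD, Finset.sum_mul]
  refine Finset.sum_le_sum fun u _ => ?_
  have h : ∀ v, (G.degree u : ℝ) * G.degree v * nearCount G u v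
      ≤ G.degree u * (G.maxDegree * nearCount G u v) := by
    intro v
    have : (G.degree v : ℝ) ≤ G.maxDegree := by exact_mod_cast G.degree_le_maxDegree v
    rw [mul_assoc]
    gcongr
  refine (Finset.sum_le_sum fun v _ => h v).trans ?_
  rw [← Finset.mul_sum, ← Finset.mul_sum]
  have := sum_nearCount G u
  gcongr
  exact_mod_cast this

/-- The side of `v` in the random bipartition: the sign of the inner product of its coefficient vector
with a Gaussian vector `x`. -/
noncomputable def roundedSign (v : V) (x : V → ℝ) : ℝ := sgnPM (∑ w, coef G v w * x w)

lemma measurable_roundedSign (v : V) : Measurable (roundedSign G v) :=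
  measurable_sgnPM.comp (by fun_prop)

lemma integrable_roundedSign_mul (u v : V) :
    Integrable (fun x => roundedSign G u x * roundedSign G v x) (Measure.pi fun _ => stdG) := by
  refine Integrable.of_bound
    ((measurable_roundedSign G u).mul (measurable_roundedSign G v)).aestronglyMeasurable 1
    (Filter.Eventually.of_forall fun x => ?_)
  unfold roundedSign
  rw [Real.norm_eq_abs, abs_mul, abs_sgnPM, abs_sgnPM, one_mul]

/-- The expected contribution of a pair: an edge gains from the correlation of its signs, and the
degree tax costs only when the closed neighbourhoods meet, since otherwise the signs are
uncorrelated. -/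
lemma pair_bound {D : ℝ} (hD0 : 0 < D) (u v : V) :
    (if G.Adj u v then (1 : ℝ) else 0) * (1 / √(G.degree u : ℝ) + 1 / √(G.degree v : ℝ))
        * (1 / (Real.pi * D))
      - (G.degree u : ℝ) * G.degree v * nearCount G u v * (1 / D ^ 2)
    ≤ ((if G.Adj u v then (1 : ℝ) else 0) / D - (G.degree u : ℝ) * G.degree v / D ^ 2)
      * ∫ x, roundedSign G u x * roundedSign G v x ∂(Measure.pi fun _ => stdG) := by
  set I := ∫ x, roundedSign G u x * roundedSign G v x ∂(Measure.pi fun _ => stdG) with hI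
  by_cases hu : G.degree u = 0
  · have : ¬ G.Adj u v := fun h => by
      have := (G.degree_pos_iff_exists_adj u).2 ⟨v, h⟩
      omega
    simp [this, hu]
  by_cases hv : G.degree v = 0
  · have : ¬ G.Adj u v := fun h => by
      have := (G.degree_pos_iff_exists_adj v).2 ⟨u, h.symm⟩
      omega
    simp [this, hv]
  have hu1 := sum_coef_sq G (Nat.pos_of_ne_zero hu)
  have hv1 := sum_coef_sq G (Nat.pos_of_ne_zero hv)
  have hI1 : I ≤ 1 := by
    refine (integral_mono (integrable_roundedSign_mul G u v) (integrable_const (1 : ℝ))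
      fun x => ?_).trans (by simp)
    unfold roundedSign
    refine (le_abs_self _).trans ?_
    rw [abs_mul, abs_sgnPM, abs_sgnPM, one_mul]
  have hIT : I ≤ nearCount G u v := by
    rcases Nat.eq_zero_or_pos (nearCount G u v) with h | h
    · rw [h, hI]
      unfold roundedSign
      rw [integral_sgnPM_pi_eq_zero hu1 hv1 (sum_coef_mul_eq_zero G h)]
      simp
    · exact hI1.trans (by exact_mod_cast h)
  have hA : (if G.Adj u v then (1 : ℝ) else 0) * (1 / √(G.degree u : ℝ) + 1 / √(G.degree v : ℝ))
        * (1 / (Real.pi * D)) ≤ (if G.Adj u v then (1 : ℝ) else 0) / D * I := by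
    split_ifs with ha
    · have h1 := le_integral_sgnPM_pi hu1 hv1
        (Finset.sum_nonneg fun w _ => mul_nonneg (coef_nonneg G u w) (coef_nonneg G v w))
      have h2 : 2 / Real.pi * (1 / 2 * (1 / √(G.degree u : ℝ) + 1 / √(G.degree v : ℝ))) ≤ I :=
        (mul_le_mul_of_nonneg_left (le_sum_coef_mul G ha) (by positivity)).trans h1
      calc _ = 1 / D * (2 / Real.pi
            * (1 / 2 * (1 / √(G.degree u : ℝ) + 1 / √(G.degree v : ℝ)))) := by
            field_simp
        _ ≤ _ := by gcongr
    · simp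
  have hB : (G.degree u : ℝ) * G.degree v / D ^ 2 * I
      ≤ (G.degree u : ℝ) * G.degree v * nearCount G u v * (1 / D ^ 2) := by
    calc _ ≤ (G.degree u : ℝ) * G.degree v / D ^ 2 * nearCount G u v := by gcongr
      _ = _ := by ring
  rw [sub_mul]
  linarith

/-- Some outcome of the random bipartition does at least as well as the expected score. -/
lemma modularity_ge_rounding {D : ℝ} (hD : D = ∑ v, (G.degree v : ℝ)) (hD0 : 0 < D) :
    (∑ v, √(G.degree v : ℝ)) / (Real.pi * D) - G.maxDegree * (G.maxDegree + 1) ^ 2 / (2 * D)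
      ≤ modularity G := by
  set B : V → V → ℝ := fun u v =>
    (if G.Adj u v then (1 : ℝ) else 0) / D - (G.degree u : ℝ) * G.degree v / D ^ 2 with hB
  have h_integrable : ∀ u v, Integrable (fun x => B u v * (roundedSign G u x * roundedSign G v x))
      (Measure.pi fun _ => stdG) := fun u v => (integrable_roundedSign_mul G u v).const_mul _
  have h_integrable_sum : Integrable (fun x => ∑ u, ∑ v, B u v * (roundedSign G u x * roundedSign G v x))
      (Measure.pi fun _ => stdG) :=
    integrable_finsetSum _ fun u _ => integrable_finsetSum _ fun v _ => h_integrable u v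
  obtain ⟨x, hx⟩ := exists_integral_le h_integrable_sum
  rw [integral_finsetSum _ fun u _ => integrable_finsetSum _ fun v _ => h_integrable u v] at hx
  have hm := modularity_ge_sign G hD hD0 (fun v => roundedSign G v x) (fun v => by
    unfold roundedSign sgnPM; split_ifs <;> simp)
  have hsum : ∑ u, ∑ v, ((if G.Adj u v then (1 : ℝ) else 0)
        * (1 / √(G.degree u : ℝ) + 1 / √(G.degree v : ℝ)) * (1 / (Real.pi * D))
      - (G.degree u : ℝ) * G.degree v * nearCount G u v * (1 / D ^ 2))
      ≤ ∑ u, ∫ x, ∑ v, B u v * (roundedSign G u x * roundedSign G v x)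
        ∂(Measure.pi fun _ => stdG) := by
    refine Finset.sum_le_sum fun u _ => ?_
    rw [integral_finsetSum _ fun v _ => h_integrable u v]
    refine Finset.sum_le_sum fun v _ => ?_
    rw [integral_const_mul]
    exact pair_bound G hD0 u v
  simp_rw [Finset.sum_sub_distrib, ← Finset.sum_mul] at hsum
  rw [sum_adj_mul_inv_sqrt] at hsum
  have hT := mul_le_mul_of_nonneg_right (sum_degree_mul_nearCount G hD)
    (show 0 ≤ 1 / D ^ 2 by positivity)
  have e1 : D * (G.maxDegree * (G.maxDegree + 1) ^ 2) * (1 / D ^ 2)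
      = 2 * (G.maxDegree * (G.maxDegree + 1) ^ 2 / (2 * D)) := by
    field_simp
  have e2 : 2 * (∑ v, √(G.degree v : ℝ)) * (1 / (Real.pi * D))
      = 2 * ((∑ v, √(G.degree v : ℝ)) / (Real.pi * D)) := by ring
  rw [e1] at hT
  rw [e2] at hsum
  linarith

end Coef

end Rounding

/-! ### The numerical comparison -/

lemma const_bound : 3 / (8 * √2) ≤ (0.2655 : ℝ) := by
  have : (1.4142 : ℝ) ≤ √2 := Real.le_sqrt_of_sq_le (by norm_num)
  rw [div_le_iff₀ (by positivity)]
  linarith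

/-- Modularity lower bound for graphs with bounded maximum degree. -/
theorem modularity_lower_bound_max_degree
    {V : Type*} [Fintype V] [DecidableEq V] (G : SimpleGraph V) [DecidableRel G.Adj]
    (n : ℕ) (hn : n = Fintype.card V)
    (dbar : ℝ) (hdbar : dbar = (∑ v : V, (G.degree v : ℝ)) / n) (hd1 : 1 ≤ dbar)
    (Δ : ℕ) (hΔ : Δ = G.maxDegree)
    (hΔ1 : 1 ≤ (Δ : ℝ) ^ 9) (hΔn : (Δ : ℝ) ^ 9 < (n : ℝ) / 6) :
    modularity G ≥
      ((3 / (8 * Real.sqrt 2)) / n) * ∑ v : V, Real.sqrt (G.degree v) / dbar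
        - (Δ : ℝ) ^ 20 / (2 * ((n : ℝ) * dbar) ^ 2) := by
  have hn0 : (0 : ℝ) < n := by linarith
  obtain ⟨D, hD⟩ : ∃ D : ℝ, D = ∑ v, (G.degree v : ℝ) := ⟨_, rfl⟩
  rw [← hD] at hdbar
  have hDn : (n : ℝ) ≤ D := by
    rw [hdbar, le_div_iff₀ hn0] at hd1; linarith
  have hD0 : 0 < D := by linarith
  set S := ∑ v, √(G.degree v : ℝ) with hS
  have hS0 : 0 ≤ S := Finset.sum_nonneg fun v _ => Real.sqrt_nonneg _
  have hc := const_bound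
  have hmain : ((3 / (8 * √2)) / n) * ∑ v : V, √(G.degree v : ℝ) / dbar
      ≤ 0.2655 * S / D := by
    rw [← Finset.sum_div, ← hS, hdbar]
    calc _ = 3 / (8 * √2) * (S / D) := by field_simp
      _ ≤ 0.2655 * (S / D) := by gcongr
      _ = _ := by ring
  have herr : 0 ≤ (Δ : ℝ) ^ 20 / (2 * ((n : ℝ) * dbar) ^ 2) := by positivity
  suffices h : 0.2655 * S / D ≤ modularity G by linarith
  have hΔpos : 1 ≤ Δ := by
    rcases Nat.eq_zero_or_pos Δ with h | h
    · rw [h] at hΔ1; norm_num at hΔ1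
    · exact h
  -- For maximum degree one the error term of the rounding bound is not small enough, so that case
  -- uses the partition into components.
  rcases Nat.eq_or_lt_of_le hΔpos with h1 | h2
  · have hm := modularity_ge_of_maxDegree_eq_one G hD hD0 (by omega)
    refine le_trans ?_ hm
    have hSD : S ≤ D := by
      rw [hS, hD]
      refine Finset.sum_le_sum fun v _ => ?_
      have : G.degree v ≤ 1 := by rw [h1, hΔ]; exact G.degree_le_maxDegree v
      interval_cases G.degree v <;> simp
    rw [← h1] at hΔn
    norm_num at hΔn
    rw [div_le_iff₀ hD0, sub_mul, div_mul_cancel₀ _ hD0.ne']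
    linarith
  · have hΔ2 : (2 : ℝ) ≤ Δ := by exact_mod_cast h2
    refine le_trans ?_ (modularity_ge_rounding G hD hD0)
    rw [← hΔ, ← hS]
    -- `S ≥ D / Δ ≥ n / Δ > 6 Δ⁸`, which dwarfs the error `Δ (Δ + 1)² / 2` even after multiplication
    -- by the small gap between `1 / π` and the constant `3 / (8 √2)`.
    have hSD : D ≤ Δ * S := by
      rw [hS, hD, Finset.mul_sum]
      refine Finset.sum_le_sum fun v _ => ?_
      have hdv : (G.degree v : ℝ) ≤ Δ := by rw [hΔ]; exact_mod_cast G.degree_le_maxDegree v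
      have hs := Real.mul_self_sqrt (show (0 : ℝ) ≤ G.degree v by positivity)
      have hsΔ : √(G.degree v : ℝ) ≤ Δ := Real.sqrt_le_iff.2 ⟨by positivity, by nlinarith⟩
      calc (G.degree v : ℝ) = √(G.degree v : ℝ) * √(G.degree v : ℝ) := hs.symm
        _ ≤ _ := by gcongr
    have hS8 : 6 * (Δ : ℝ) ^ 8 ≤ S := by
      have : (Δ : ℝ) * (6 * (Δ : ℝ) ^ 8) ≤ Δ * S := by
        calc _ = 6 * (Δ : ℝ) ^ 9 := by ring
          _ ≤ _ := by linarith
      exact le_of_mul_le_mul_left this (by linarith)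
    have hpow : (32 : ℝ) * Δ ^ 3 ≤ Δ ^ 8 := by
      have : (2 : ℝ) ^ 5 ≤ Δ ^ 5 := by gcongr
      calc (32 : ℝ) * Δ ^ 3 ≤ Δ ^ 5 * Δ ^ 3 := by gcongr; linarith
        _ = _ := by ring
    have hpoly : (Δ : ℝ) * (Δ + 1) ^ 2 ≤ 4 * Δ ^ 3 := by
      have : ((Δ : ℝ) + 1) ^ 2 ≤ (2 * Δ) ^ 2 := by gcongr; linarith
      calc (Δ : ℝ) * (Δ + 1) ^ 2 ≤ Δ * (2 * Δ) ^ 2 := by gcongr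
        _ = _ := by ring
    have hpi : 0.317 * S ≤ S / Real.pi := by
      rw [le_div_iff₀ Real.pi_pos]
      have := Real.pi_lt_d2
      nlinarith
    have e : S / (Real.pi * D) - Δ * (Δ + 1) ^ 2 / (2 * D)
        = (S / Real.pi - Δ * (Δ + 1) ^ 2 / 2) / D := by
      field_simp
    rw [e]
    gcongr
    have h3 : (0 : ℝ) ≤ (Δ : ℝ) ^ 3 := by positivity
    linarith
end

section
/- Let G be an n-vertex simple graph with average degree d̄ ≥ 1, let C ≥ 2, and let L = {v ∈ V(G) : deg_G(v) < C·d̄} be the set of low-degree vertices. For v ∈ L let d_v' denote the degree of v in the induced subgraph G[L]. If ϑ := (C·d̄)^10/n < 1, then q*(G) ≥ (c/(2·n·d̄))·Σ_{v∈L} √(d_v') − ϑ²/(2·d̄²) − 3/(8·√n) − Δ(G)²/(4·(n·d̄)²), where c = 3/(8√2) and Δ(G) is the maximum degree of G. -/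
/-!
Write `m` for the number of edges, so `2m = n · dbar`, and put `K = C · dbar`. A partition of the
vertices into two classes is a sign vector `x`, and its score is `Q(x) / (2m)`, where `Q` is the
quadratic form with matrix `A_{uw} / 2 - d_u d_w / (4m)`. Signs chosen separately on two disjoint
vertex sets can be merged at no loss, flipping one of the two sides if the cross term is negative
(`exists_sign_union`). Hence `L` and its complement can be treated independently.

On `L` the signs come from correlated random variables. Each `u ∈ L` receives the vector
`(e_u + d'_u ^ (-1/2) ∑_{w ∈ N_L(u)} e_w) / √2`, of norm at most one; a standard Gaussian `g` is
paired with it, and the bounded odd function `wave` is applied. Two such values have correlation at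
least `3 / (4√2)` times the inner product of the vectors (`wave_corr_ge`), and correlation zero
when the vectors are orthogonal (`wave_corr_zero`). The function `wave` is a sine polynomial with
nonnegative coefficients, so these moments are explicit combinations of `sinh` with nonnegative
weights. Adjacent `u, w` have inner product at least `(d'_u ^ (-1/2) + d'_w ^ (-1/2)) / 2`, so the
adjacency part of `Q` has mean at least `3 / (8√2) · ∑ √d'_v`. A vertex is correlated with at most
`K + K²` vertices, all of degree at most `K`, so the degree part costs at most `K (K + K²) / 2`.
Off the diagonal `Q` is affine in each coordinate, so values in `[-1, 1]` can be rounded to signs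
(`exists_sign_ge`); this is `low_bound`.

On the complement, the vertices of degree greater than `√(2m)` are paired consecutively by
decreasing degree, with opposite signs inside each pair. A pair costs at most one edge and the
square of the difference of its degrees, and these squares telescope to at most `Δ²`. The remaining
vertices are rounded from `0`, so only their diagonal terms count; this is `heavy_bound`, with
total loss `Δ² / (4m) + √(2m) / 2`.

Adding the two parts, and using `K⁵ ≤ √n`, the modularity is at least `2T` with
`T = c / (2 n dbar) · ∑ √d'_v - 3 / (8√n) - Δ² / (4 (n dbar)²)`. As the modularity is nonnegative,
it is also at least `T`.
-/

open Finset

open MeasureTheory ProbabilityTheory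

/-! ### Gaussian correlations of a sine polynomial -/

/-- The standard Gaussian measure on `V → ℝ`. -/
noncomputable abbrev stdGauss (V : Type*) [Fintype V] : Measure (V → ℝ) :=
  Measure.pi (fun _ : V => gaussianReal 0 1)

/-- The real part of the characteristic function of the standard Gaussian. -/
theorem integral_cos_stdGauss {V : Type*} [Fintype V] (a : V → ℝ) :
    ∫ g, Real.cos (∑ i, a i * g i) ∂(stdGauss V) = Real.exp (-(∑ i, a i ^ 2) / 2) := by
  have hc : ∫ g, Complex.exp (((∑ i, a i * g i : ℝ) : ℂ) * Complex.I) ∂(stdGauss V)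
      = ((Real.exp (-(∑ i, a i ^ 2) / 2) : ℝ) : ℂ) := by
    have h1 : ∀ g : V → ℝ, Complex.exp (((∑ i, a i * g i : ℝ) : ℂ) * Complex.I)
        = ∏ i, Complex.exp ((a i : ℂ) * (g i : ℂ) * Complex.I) := by
      intro g
      rw [← Complex.exp_sum]
      congr 1
      push_cast
      rw [Finset.sum_mul]
    simp_rw [h1]
    rw [integral_fintype_prod_eq_prod
      (f := fun (i : V) (x : ℝ) => Complex.exp ((a i : ℂ) * (x : ℂ) * Complex.I))]
    have h2 : ∀ i, ∫ x : ℝ, Complex.exp ((a i : ℂ) * (x : ℂ) * Complex.I) ∂(gaussianReal 0 1)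
        = Complex.exp (-(a i : ℂ) ^ 2 / 2) := by
      intro i
      rw [← charFun_apply_real, charFun_gaussianReal]
      congr 1
      push_cast
      ring
    simp_rw [h2]
    rw [← Complex.exp_sum]
    push_cast
    congr 1
    rw [← Finset.sum_div, Finset.sum_neg_distrib]
  have hint : Integrable (fun g : V → ℝ => Complex.exp (((∑ i, a i * g i : ℝ) : ℂ) * Complex.I))
      (stdGauss V) := by
    refine Integrable.of_bound (C := 1) ?_ ?_
    · exact (by fun_prop : Continuous _).aestronglyMeasurable
    · exact Filter.Eventually.of_forall fun g => by rw [Complex.norm_exp_ofReal_mul_I]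
  have hre := integral_re hint
  rw [hc] at hre
  simpa only [RCLike.re_eq_complex_re, Complex.exp_ofReal_mul_I_re, Complex.ofReal_re] using hre

theorem integrable_of_cont_bound {V : Type*} [Fintype V] {f : (V → ℝ) → ℝ} (hf : Continuous f)
    (C : ℝ) (hC : ∀ g, |f g| ≤ C) : Integrable f (stdGauss V) :=
  Integrable.of_bound (C := C) hf.aestronglyMeasurable (Filter.Eventually.of_forall hC)

/-- Product-to-sum turns the moment into two values of the characteristic function, whose difference
is a `sinh` of the inner product `⟨a, b⟩`; in particular its sign is that of `⟨a, b⟩`. -/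
theorem integral_sin_mul_sin {V : Type*} [Fintype V] (a b : V → ℝ) :
    ∫ g, Real.sin (∑ i, a i * g i) * Real.sin (∑ i, b i * g i) ∂(stdGauss V)
      = Real.exp (-(∑ i, a i ^ 2) / 2) * Real.exp (-(∑ i, b i ^ 2) / 2)
        * Real.sinh (∑ i, a i * b i) := by
  have h1 : ∀ g : V → ℝ, Real.sin (∑ i, a i * g i) * Real.sin (∑ i, b i * g i)
      = (Real.cos (∑ i, (a i - b i) * g i) - Real.cos (∑ i, (a i + b i) * g i)) / 2 := by
    intro g
    simp_rw [sub_mul, add_mul, Finset.sum_sub_distrib, Finset.sum_add_distrib]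
    rw [Real.cos_sub, Real.cos_add]
    ring
  simp_rw [h1]
  have hi : ∀ c : V → ℝ, Integrable (fun g : V → ℝ => Real.cos (∑ i, c i * g i)) (stdGauss V) :=
    fun c => integrable_of_cont_bound (by fun_prop) 1 fun g => Real.abs_cos_le_one _
  rw [integral_div, integral_sub (hi _) (hi _), integral_cos_stdGauss, integral_cos_stdGauss,
    Real.sinh_eq]
  have e1 : -(∑ i, (a i - b i) ^ 2) / 2
      = -(∑ i, a i ^ 2) / 2 + -(∑ i, b i ^ 2) / 2 + ∑ i, a i * b i := by
    have : ∑ i, (a i - b i) ^ 2 = ∑ i, a i ^ 2 + ∑ i, b i ^ 2 - 2 * ∑ i, a i * b i := by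
      rw [Finset.mul_sum, ← Finset.sum_add_distrib, ← Finset.sum_sub_distrib]
      exact Finset.sum_congr rfl fun i _ => by ring
    rw [this]; ring
  have e2 : -(∑ i, (a i + b i) ^ 2) / 2
      = -(∑ i, a i ^ 2) / 2 + -(∑ i, b i ^ 2) / 2 + -∑ i, a i * b i := by
    have : ∑ i, (a i + b i) ^ 2 = ∑ i, a i ^ 2 + ∑ i, b i ^ 2 + 2 * ∑ i, a i * b i := by
      rw [Finset.mul_sum, ← Finset.sum_add_distrib, ← Finset.sum_add_distrib]
      exact Finset.sum_congr rfl fun i _ => by ring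
    rw [this]; ring
  rw [e1, e2]
  simp only [Real.exp_add]
  ring

/-- The sine coefficients of `wave`: the function `z ↦ (35 / 16) ∫₀ᶻ cos⁷`, written out. -/
noncomputable def waveCoef : Fin 4 → ℝ := ![1225 / 1024, 245 / 1024, 49 / 1024, 5 / 1024]

/-- The frequencies of `wave`. -/
noncomputable def waveFreq : Fin 4 → ℝ := ![1, 3, 5, 7]

/-- The sine polynomial `P (sin z)`, where `P` is the odd polynomial of degree seven with
`P' (s) = (35 / 16) (1 - s²)³` and `P 1 = 1`. It is a smooth substitute for the sign function:
bounded by `1`, with nonnegative sine coefficients. -/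
noncomputable def wave (z : ℝ) : ℝ := ∑ j, waveCoef j * Real.sin (waveFreq j * z)

theorem waveCoef_nonneg (j : Fin 4) : 0 ≤ waveCoef j := by
  fin_cases j <;> norm_num [waveCoef]

theorem waveFreq_nonneg (j : Fin 4) : 0 ≤ waveFreq j := by
  fin_cases j <;> norm_num [waveFreq]

theorem wave_eq (z : ℝ) :
    wave z = (35 * Real.sin z - 35 * Real.sin z ^ 3 + 21 * Real.sin z ^ 5
      - 5 * Real.sin z ^ 7) / 16 := by
  have h2 : Real.cos z ^ 2 = 1 - Real.sin z ^ 2 := Real.cos_sq' z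
  have s3 : Real.sin (3 * z) = 3 * Real.sin z - 4 * Real.sin z ^ 3 := Real.sin_three_mul z
  have c2 : Real.cos (2 * z) = 1 - 2 * Real.sin z ^ 2 := by
    rw [Real.cos_two_mul, h2]; ring
  -- the product-to-sum recursion `sin (θ + 2z) + sin (θ - 2z) = 2 sin θ cos 2z`
  have s5 : Real.sin (5 * z) = 2 * Real.sin (3 * z) * Real.cos (2 * z) - Real.sin z := by
    have e1 := Real.sin_add (3 * z) (2 * z)
    have e2 := Real.sin_sub (3 * z) (2 * z)
    rw [show 3 * z + 2 * z = 5 * z by ring] at e1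
    rw [show 3 * z - 2 * z = z by ring] at e2
    linarith
  have s7 : Real.sin (7 * z) = 2 * Real.sin (5 * z) * Real.cos (2 * z) - Real.sin (3 * z) := by
    have e1 := Real.sin_add (5 * z) (2 * z)
    have e2 := Real.sin_sub (5 * z) (2 * z)
    rw [show 5 * z + 2 * z = 7 * z by ring] at e1
    rw [show 5 * z - 2 * z = 3 * z by ring] at e2
    linarith
  simp only [wave, waveCoef, waveFreq, Fin.sum_univ_four]
  simp only [Matrix.cons_val, one_mul]
  rw [s7, s5, s3, c2]
  ring

theorem abs_wave_le (z : ℝ) : |wave z| ≤ 1 := by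
  have key : ∀ s : ℝ, -1 ≤ s → s ≤ 1 → (35 * s - 35 * s ^ 3 + 21 * s ^ 5 - 5 * s ^ 7) / 16 ≤ 1 := by
    intro s h1 h2
    have h0 : 0 ≤ s + 1 := by linarith
    -- `1 - P` vanishes to order four at `s = 1`; this product is `16 (1 - P s)`
    have : 0 ≤ (1 - s) ^ 4 * (5 * (s + 1) ^ 3 + 5 * (s + 1) ^ 2 + 4 * (s + 1) + 2) := by
      positivity
    nlinarith [this]
  rw [wave_eq, abs_le]
  constructor
  · have := key (-Real.sin z) (by linarith [Real.sin_le_one z]) (by linarith [Real.neg_one_le_sin z])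
    have e : (35 * (-Real.sin z) - 35 * (-Real.sin z) ^ 3 + 21 * (-Real.sin z) ^ 5
        - 5 * (-Real.sin z) ^ 7) / 16 = -((35 * Real.sin z - 35 * Real.sin z ^ 3
          + 21 * Real.sin z ^ 5 - 5 * Real.sin z ^ 7) / 16) := by ring
    rw [e] at this
    linarith
  · exact key _ (Real.neg_one_le_sin z) (Real.sin_le_one z)

theorem continuous_wave : Continuous wave := by
  unfold wave; fun_prop

theorem integral_wave_mul_wave {V : Type*} [Fintype V] (a b : V → ℝ) :
    ∫ g, wave (∑ i, a i * g i) * wave (∑ i, b i * g i) ∂(stdGauss V)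
      = ∑ j, ∑ k, waveCoef j * waveCoef k
        * (Real.exp (-(waveFreq j ^ 2 * ∑ i, a i ^ 2) / 2)
          * Real.exp (-(waveFreq k ^ 2 * ∑ i, b i ^ 2) / 2)
          * Real.sinh (waveFreq j * waveFreq k * ∑ i, a i * b i)) := by
  have h1 : ∀ g : V → ℝ, wave (∑ i, a i * g i) * wave (∑ i, b i * g i)
      = ∑ j, ∑ k, waveCoef j * waveCoef k * (Real.sin (∑ i, (waveFreq j * a i) * g i)
          * Real.sin (∑ i, (waveFreq k * b i) * g i)) := by
    intro g
    simp only [wave]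
    rw [Finset.sum_mul_sum]
    refine Finset.sum_congr rfl fun j _ => Finset.sum_congr rfl fun k _ => ?_
    simp only [mul_assoc (waveFreq _), ← Finset.mul_sum]
    ring
  have hi : ∀ j k, Integrable (fun g : V → ℝ => waveCoef j * waveCoef k
      * (Real.sin (∑ i, (waveFreq j * a i) * g i) * Real.sin (∑ i, (waveFreq k * b i) * g i)))
      (stdGauss V) := fun j k => Integrable.const_mul
    (integrable_of_cont_bound (by fun_prop) 1 fun g => by
      rw [abs_mul]
      exact mul_le_one₀ (Real.abs_sin_le_one _) (abs_nonneg _) (Real.abs_sin_le_one _)) _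
  simp_rw [h1]
  rw [integral_finsetSum _ fun j _ => integrable_finsetSum _ fun k _ => hi j k]
  refine Finset.sum_congr rfl fun j _ => ?_
  rw [integral_finsetSum _ fun k _ => hi j k]
  refine Finset.sum_congr rfl fun k _ => ?_
  rw [integral_const_mul, integral_sin_mul_sin]
  have e3 : ∑ i, waveFreq j * a i * (waveFreq k * b i)
      = waveFreq j * waveFreq k * ∑ i, a i * b i := by
    rw [Finset.mul_sum]
    exact Finset.sum_congr rfl fun i _ => by ring
  simp only [mul_pow, ← Finset.mul_sum, e3]

theorem wave_corr_zero {V : Type*} [Fintype V] (a b : V → ℝ) (hab : ∑ i, a i * b i = 0) :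
    ∫ g, wave (∑ i, a i * g i) * wave (∑ i, b i * g i) ∂(stdGauss V) = 0 := by
  rw [integral_wave_mul_wave, hab]
  simp

theorem integrable_wave_mul_wave {V : Type*} [Fintype V] (a b : V → ℝ) :
    Integrable (fun g => wave (∑ i, a i * g i) * wave (∑ i, b i * g i)) (stdGauss V) := by
  have := continuous_wave
  refine integrable_of_cont_bound (by fun_prop) 1 fun g => ?_
  rw [abs_mul]
  exact mul_le_one₀ (abs_wave_le _) (abs_nonneg _) (abs_wave_le _)

theorem wave_corr_le_one {V : Type*} [Fintype V] (a b : V → ℝ) :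
    ∫ g, wave (∑ i, a i * g i) * wave (∑ i, b i * g i) ∂(stdGauss V) ≤ 1 := by
  have h : ∀ g : V → ℝ, wave (∑ i, a i * g i) * wave (∑ i, b i * g i) ≤ 1 := fun g =>
    (le_abs_self _).trans (by
      rw [abs_mul]; exact mul_le_one₀ (abs_wave_le _) (abs_nonneg _) (abs_wave_le _))
  calc _ ≤ ∫ _, (1 : ℝ) ∂(stdGauss V) :=
        integral_mono (integrable_wave_mul_wave a b) (integrable_const _) h
    _ = 1 := by simp

/-- The right-hand side squares the first two terms of `∑ j, c_j f_j exp (-f_j² / 2)`, with `c_j`, `f_j`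
the coefficients and frequencies of `wave`; these two already suffice for the constant. -/
theorem gauss_const :
    (3 / (4 * Real.sqrt 2)) ≤ (1225 / 1024 * Real.exp (-1 / 2) + 735 / 1024 * Real.exp (-9 / 2)) ^ 2 := by
  have a : Real.exp (-1 / 2) ^ 2 = Real.exp (-1) := by rw [← Real.exp_nat_mul]; norm_num
  have b : Real.exp (-1 / 2) * Real.exp (-9 / 2) = Real.exp (-1) ^ 5 := by
    rw [← Real.exp_add, ← Real.exp_nat_mul]; norm_num
  have e0 : (0.3678 : ℝ) ≤ Real.exp (-1) := by
    rw [Real.exp_neg, le_inv_comm₀ (by norm_num) (Real.exp_pos _)]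
    exact Real.exp_one_lt_d9.le.trans (by norm_num)
  have e5 : (0.3678 : ℝ) ^ 5 ≤ Real.exp (-1) ^ 5 := by gcongr
  have s : 3 / (4 * Real.sqrt 2) ≤ 0.5304 := by
    have : (1.4142 : ℝ) ≤ Real.sqrt 2 := Real.le_sqrt_of_sq_le (by norm_num)
    rw [div_le_iff₀ (by positivity)]
    linarith
  have p : 0 ≤ Real.exp (-9 / 2) ^ 2 := by positivity
  nlinarith [a, b, e0, e5, s, p]

/-- Every term of the expansion into `sinh` is nonnegative, so `t ≤ sinh t` and the norm bounds may be
applied term by term. -/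
theorem wave_corr_ge {V : Type*} [Fintype V] (a b : V → ℝ) (ha : ∑ i, a i ^ 2 ≤ 1)
    (hb : ∑ i, b i ^ 2 ≤ 1) (hab : 0 ≤ ∑ i, a i * b i) :
    3 / (4 * Real.sqrt 2) * ∑ i, a i * b i
      ≤ ∫ g, wave (∑ i, a i * g i) * wave (∑ i, b i * g i) ∂(stdGauss V) := by
  rw [integral_wave_mul_wave]
  set ρ := ∑ i, a i * b i with hρ
  set w : Fin 4 → ℝ := fun j => waveCoef j * waveFreq j * Real.exp (-(waveFreq j ^ 2) / 2) with hw
  have hw0 : ∀ j, 0 ≤ w j := fun j =>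
    mul_nonneg (mul_nonneg (waveCoef_nonneg j) (waveFreq_nonneg j)) (Real.exp_pos _).le
  have h1 : (∑ j, w j) ^ 2 * ρ ≤ ∑ j, ∑ k, waveCoef j * waveCoef k
        * (Real.exp (-(waveFreq j ^ 2 * ∑ i, a i ^ 2) / 2)
          * Real.exp (-(waveFreq k ^ 2 * ∑ i, b i ^ 2) / 2)
          * Real.sinh (waveFreq j * waveFreq k * ρ)) := by
    rw [sq, Finset.sum_mul_sum, Finset.sum_mul]
    refine Finset.sum_le_sum fun j _ => ?_
    rw [Finset.sum_mul]
    refine Finset.sum_le_sum fun k _ => ?_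
    have hj := waveFreq_nonneg j
    have hk := waveFreq_nonneg k
    have e1 : Real.exp (-(waveFreq j ^ 2) / 2) ≤ Real.exp (-(waveFreq j ^ 2 * ∑ i, a i ^ 2) / 2) := by
      apply Real.exp_le_exp.2
      nlinarith [mul_le_mul_of_nonneg_left ha (sq_nonneg (waveFreq j))]
    have e2 : Real.exp (-(waveFreq k ^ 2) / 2) ≤ Real.exp (-(waveFreq k ^ 2 * ∑ i, b i ^ 2) / 2) := by
      apply Real.exp_le_exp.2
      nlinarith [mul_le_mul_of_nonneg_left hb (sq_nonneg (waveFreq k))]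
    have e3 : waveFreq j * waveFreq k * ρ ≤ Real.sinh (waveFreq j * waveFreq k * ρ) :=
      Real.self_le_sinh_iff.2 (by positivity)
    have hcj := waveCoef_nonneg j
    have hck := waveCoef_nonneg k
    calc w j * w k * ρ = waveCoef j * waveCoef k * (Real.exp (-(waveFreq j ^ 2) / 2)
          * Real.exp (-(waveFreq k ^ 2) / 2) * (waveFreq j * waveFreq k * ρ)) := by
          simp only [hw]; ring
      _ ≤ _ := by gcongr
  refine le_trans ?_ h1
  gcongr
  refine gauss_const.trans ?_
  have : 1225 / 1024 * Real.exp (-1 / 2) + 735 / 1024 * Real.exp (-9 / 2) ≤ ∑ j, w j := by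
    rw [Fin.sum_univ_four]
    have e0 : w 0 = 1225 / 1024 * Real.exp (-1 / 2) := by norm_num [hw, waveCoef, waveFreq]
    have e1 : w 1 = 735 / 1024 * Real.exp (-9 / 2) := by norm_num [hw, waveCoef, waveFreq]
    linarith [hw0 2, hw0 3]
  gcongr

/-! ### Quadratic forms on sign vectors -/

/-- The quadratic form of `b` restricted to the coordinates in `S`. -/
def quadOn {V : Type*} (b : V → V → ℝ) (S : Finset V) (x : V → ℝ) : ℝ :=
  ∑ u ∈ S, ∑ w ∈ S, b u w * x u * x w

/-- A vector with all entries `1` or `-1`. -/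
def IsSign {V : Type*} (x : V → ℝ) : Prop := ∀ v, x v = 1 ∨ x v = -1

theorem quadOn_congr {V : Type*} (b : V → V → ℝ) (S : Finset V) {x y : V → ℝ}
    (h : ∀ v ∈ S, x v = y v) : quadOn b S x = quadOn b S y := by
  refine Finset.sum_congr rfl fun u hu => Finset.sum_congr rfl fun w hw => ?_
  rw [h u hu, h w hw]

/-- Sign vectors on disjoint sets merge without loss: one of `(x, z)` and `(x, -z)` has a nonnegative
cross term. -/
theorem exists_sign_union {V : Type*} [DecidableEq V] (b : V → V → ℝ) {S T : Finset V}
    (hST : Disjoint S T) {x z : V → ℝ} (hx : IsSign x) (hz : IsSign z) :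
    ∃ x', IsSign x' ∧ quadOn b S x + quadOn b T z ≤ quadOn b (S ∪ T) x' := by
  -- `c` is the cross term, and `X ε` is the merged vector `(x, ε z)`
  set X : ℝ → V → ℝ := fun ε v => if v ∈ S then x v else ε * z v with hX
  have hXS : ∀ ε, ∀ v ∈ S, X ε v = x v := fun ε v hv => if_pos hv
  have hXT : ∀ ε, ∀ v ∈ T, X ε v = ε * z v := fun ε v hv =>
    if_neg (Finset.disjoint_right.1 hST hv)
  set c := ∑ u ∈ S, ∑ w ∈ T, b u w * x u * z w + ∑ u ∈ T, ∑ w ∈ S, b u w * z u * x w with hc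
  have key : ∀ ε : ℝ, quadOn b (S ∪ T) (X ε) = quadOn b S x + ε ^ 2 * quadOn b T z + ε * c := by
    intro ε
    have e1 : ∑ u ∈ S, ∑ w ∈ S, b u w * X ε u * X ε w = quadOn b S x :=
      quadOn_congr b S (hXS ε)
    have e2 : ∑ u ∈ T, ∑ w ∈ T, b u w * X ε u * X ε w = ε ^ 2 * quadOn b T z := by
      rw [quadOn, Finset.mul_sum]
      refine Finset.sum_congr rfl fun u hu => ?_
      rw [Finset.mul_sum]
      refine Finset.sum_congr rfl fun w hw => ?_
      rw [hXT ε u hu, hXT ε w hw]; ring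
    have e3 : ∑ u ∈ S, ∑ w ∈ T, b u w * X ε u * X ε w
        = ε * ∑ u ∈ S, ∑ w ∈ T, b u w * x u * z w := by
      rw [Finset.mul_sum]
      refine Finset.sum_congr rfl fun u hu => ?_
      rw [Finset.mul_sum]
      refine Finset.sum_congr rfl fun w hw => ?_
      rw [hXS ε u hu, hXT ε w hw]; ring
    have e4 : ∑ u ∈ T, ∑ w ∈ S, b u w * X ε u * X ε w
        = ε * ∑ u ∈ T, ∑ w ∈ S, b u w * z u * x w := by
      rw [Finset.mul_sum]
      refine Finset.sum_congr rfl fun u hu => ?_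
      rw [Finset.mul_sum]
      refine Finset.sum_congr rfl fun w hw => ?_
      rw [hXT ε u hu, hXS ε w hw]; ring
    rw [quadOn, Finset.sum_union hST]
    simp_rw [Finset.sum_union hST, Finset.sum_add_distrib]
    rw [e1, e2, e3, e4, hc]
    ring
  have hsign : ∀ ε : ℝ, (ε = 1 ∨ ε = -1) → IsSign (X ε) := by
    intro ε hε v
    by_cases hv : v ∈ S
    · simpa [hX, hv] using hx v
    · rcases hε with rfl | rfl <;> rcases hz v with h | h <;> simp [hX, hv, h]
  rcases le_total 0 c with h | h
  · exact ⟨X 1, hsign 1 (Or.inl rfl), by rw [key]; linarith⟩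
  · exact ⟨X (-1), hsign (-1) (Or.inr rfl), by rw [key]; linarith⟩

/-- With zero diagonal the form is affine in each coordinate, so the coordinates can be moved one at a
time to an endpoint of `[-1, 1]` without decreasing it. -/
theorem exists_sign_ge_of_diag_zero {V : Type*} [Fintype V] [DecidableEq V] (b : V → V → ℝ)
    (hb : ∀ v, b v v = 0) (S : Finset V) (y : V → ℝ) (hy : ∀ v, |y v| ≤ 1) :
    ∃ x, IsSign x ∧ quadOn b S y ≤ quadOn b S x := by
  have key : ∀ T : Finset V, ∃ x : V → ℝ, (∀ v ∈ T, x v = 1 ∨ x v = -1) ∧ (∀ v, |x v| ≤ 1) ∧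
      quadOn b S y ≤ quadOn b S x := by
    intro T
    induction T using Finset.induction_on with
    | empty => exact ⟨y, by simp, hy, le_rfl⟩
    | insert v T _ ih =>
      obtain ⟨x, hxT, hx1, hxy⟩ := ih
      set e : V → ℝ := Pi.single v 1 with he
      set x₀ : V → ℝ := Function.update x v 0 with hx₀
      set β := ∑ u ∈ S, ∑ w ∈ S, (b u w * x₀ u * e w + b u w * e u * x₀ w) with hβ
      -- the form is affine in the coordinate `v`, with slope `β`
      have aff : ∀ t, quadOn b S (Function.update x v t) = quadOn b S x₀ + t * β := by
        intro t
        have hu : ∀ u, Function.update x v t u = x₀ u + t * e u := by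
          intro u
          by_cases h : u = v
          · subst h; simp [hx₀, he]
          · simp [hx₀, he, h]
        have hz : ∀ u w, b u w * e u * e w = 0 := by
          intro u w
          by_cases h : u = v
          · by_cases h' : w = v
            · rw [h, h', hb]; simp
            · simp [he, h']
          · simp [he, h]
        rw [hβ, quadOn, quadOn, Finset.mul_sum, ← Finset.sum_add_distrib]
        refine Finset.sum_congr rfl fun u _ => ?_
        rw [Finset.mul_sum, ← Finset.sum_add_distrib]
        refine Finset.sum_congr rfl fun w _ => ?_
        rw [hu, hu]
        linear_combination t ^ 2 * hz u w
      have hxx : quadOn b S x = quadOn b S x₀ + x v * β := by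
        rw [← aff (x v), Function.update_eq_self]
      have hv := abs_le.1 (hx1 v)
      have fin : ∀ ε : ℝ, (ε = 1 ∨ ε = -1) → x v * β ≤ ε * β →
          ∃ x : V → ℝ, (∀ u ∈ insert v T, x u = 1 ∨ x u = -1) ∧ (∀ v, |x v| ≤ 1) ∧
            quadOn b S y ≤ quadOn b S x := by
        intro ε hε hle
        refine ⟨Function.update x v ε, ?_, ?_, ?_⟩
        · intro u hu
          by_cases h : u = v
          · subst h; simpa using hε
          · simpa [h] using hxT u (Finset.mem_of_mem_insert_of_ne hu h)
        · intro u
          by_cases h : u = v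
          · subst h; rcases hε with rfl | rfl <;> simp
          · simpa [h] using hx1 u
        · rw [aff]; linarith
      rcases le_total 0 β with h | h
      · exact fin 1 (Or.inl rfl) (by nlinarith)
      · exact fin (-1) (Or.inr rfl) (by nlinarith)
  obtain ⟨x, h1, _, h3⟩ := key Finset.univ
  exact ⟨x, fun v => h1 v (Finset.mem_univ v), h3⟩

theorem IsSign.sq {V : Type*} {x : V → ℝ} (hx : IsSign x) (v : V) : x v * x v = 1 := by
  rcases hx v with h | h <;> rw [h] <;> norm_num

/-- Rounding for an arbitrary diagonal: on a sign vector `x u * x u = 1`, so the diagonal terms are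
constant and are counted in full before rounding. -/
theorem exists_sign_ge {V : Type*} [Fintype V] [DecidableEq V] (b : V → V → ℝ)
    (S : Finset V) (y : V → ℝ) (hy : ∀ v, |y v| ≤ 1) :
    ∃ x, IsSign x ∧
      ∑ u ∈ S, ∑ w ∈ S, b u w * (if u = w then 1 else y u * y w) ≤ quadOn b S x := by
  obtain ⟨x, hx, h⟩ := exists_sign_ge_of_diag_zero (fun u w => if u = w then 0 else b u w)
    (fun v => by simp) S y hy
  refine ⟨x, hx, ?_⟩
  have split : ∀ z : V → ℝ, ∑ u ∈ S, ∑ w ∈ S, b u w * (if u = w then 1 else z u * z w)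
      = quadOn (fun u w => if u = w then 0 else b u w) S z
        + ∑ u ∈ S, ∑ w ∈ S, (if u = w then b u w else 0) := by
    intro z
    rw [quadOn, ← Finset.sum_add_distrib]
    refine Finset.sum_congr rfl fun u _ => ?_
    rw [← Finset.sum_add_distrib]
    refine Finset.sum_congr rfl fun w _ => ?_
    split_ifs <;> ring
  have hq : quadOn b S x = ∑ u ∈ S, ∑ w ∈ S, b u w * (if u = w then 1 else x u * x w) := by
    refine Finset.sum_congr rfl fun u _ => Finset.sum_congr rfl fun w _ => ?_
    split_ifs with h
    · subst h; rw [mul_assoc, hx.sq]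
    · ring
  rw [hq, split, split]
  linarith

/-! ### Modularity as a quadratic form -/

/-- Half of the modularity matrix, `A_{uw} / 2 - d_u d_w / (4m)`. With this normalisation a partition
into two classes with sign vector `x` scores its quadratic form at `x` divided by `2m`. -/
noncomputable def modMatrix {V : Type*} [Fintype V] [DecidableEq V]
    (G : SimpleGraph V) [DecidableRel G.Adj] (u w : V) : ℝ :=
  (if G.Adj u w then 1 else 0) / 2
    - (G.degree u : ℝ) * (G.degree w : ℝ) / (4 * (G.edgeFinset.card : ℝ))

theorem sum_degree_real {V : Type*} [Fintype V] (G : SimpleGraph V)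
    [DecidableRel G.Adj] :
    ∑ v, (G.degree v : ℝ) = 2 * (G.edgeFinset.card : ℝ) := by
  exact_mod_cast G.sum_degrees_eq_twice_card_edges

theorem sum_sum_adj {V : Type*} [Fintype V] (G : SimpleGraph V)
    [DecidableRel G.Adj] :
    ∑ u, ∑ w, (if G.Adj u w then (1 : ℝ) else 0) = 2 * (G.edgeFinset.card : ℝ) := by
  rw [← sum_degree_real]
  refine Finset.sum_congr rfl fun u _ => ?_
  rw [Finset.sum_boole, ← SimpleGraph.card_neighborFinset_eq_degree,
    SimpleGraph.neighborFinset_eq_filter]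

section
variable {V : Type*} [Fintype V] [DecidableEq V] (G : SimpleGraph V) [DecidableRel G.Adj]

/-- The two classes of `x` form a partition with score `Q(x) / (2m)`. -/
theorem quad_le_modularity (hm : 0 < (G.edgeFinset.card : ℝ)) {x : V → ℝ} (hx : IsSign x) :
    quadOn (modMatrix G) Finset.univ x / (2 * (G.edgeFinset.card : ℝ)) ≤ modularity G := by
  set m : ℝ := (G.edgeFinset.card : ℝ) with hmdef
  set f : Finset V → ℝ := fun A => edgeCount G A / m - (vol G A / (2 * m)) ^ 2 with hf
  set A : Finset V := Finset.univ.filter fun v => x v = 1 with hA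
  -- one of the classes may be empty, in which case it is no part of the partition
  have hfe : f ∅ = 0 := by simp [hf, edgeCount, vol]
  have hVne : Nonempty V := by
    by_contra h
    rw [not_nonempty_iff] at h
    have : G.edgeFinset.card = 0 := by
      have := sum_degree_real G
      simp only [Finset.univ_eq_empty, Finset.sum_empty] at this
      have h0 : (G.edgeFinset.card : ℝ) = 0 := by linarith
      exact_mod_cast h0
    rw [hmdef, this] at hm
    simp at hm
  have hne : A ≠ Aᶜ := by
    obtain ⟨v⟩ := hVne
    intro h
    by_cases hv : v ∈ A
    · exact (Finset.mem_compl.1 (h ▸ hv)) hv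
    · exact hv (h ▸ Finset.mem_compl.2 hv)
  obtain ⟨P, hP⟩ : ∃ P : Finpartition (Finset.univ : Finset V),
      modularityScore G P = f A + f Aᶜ := by
    have hd : ({A, Aᶜ} : Finset (Finset V)).SupIndep id := by
      rw [Finset.supIndep_pair hne]
      exact disjoint_compl_right
    refine ⟨Finpartition.ofErase {A, Aᶜ} hd (by simp), ?_⟩
    have : modularityScore G (Finpartition.ofErase {A, Aᶜ} hd (by simp))
        = ∑ B ∈ ({A, Aᶜ} : Finset (Finset V)).erase ⊥, f B := rfl
    rw [this, Finset.bot_eq_empty, Finset.sum_erase _ hfe, Finset.sum_pair hne]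
  have hle : f A + f Aᶜ ≤ modularity G := by
    rw [← hP]
    exact le_ciSup (f := fun P => modularityScore G P) (Set.finite_range _).bddAbove P
  refine le_trans (le_of_eq ?_) hle
  -- indicators of the two sides in terms of the sign vector
  have iA : ∀ v, (if v ∈ A then (1 : ℝ) else 0) = (1 + x v) / 2 := by
    intro v
    rcases hx v with h | h
    · simp [hA, h]
    · norm_num [hA, h]
  have iB : ∀ v, (if v ∈ Aᶜ then (1 : ℝ) else 0) = (1 - x v) / 2 := by
    intro v
    rcases hx v with h | h
    · simp [hA, h]
    · norm_num [hA, h]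
  -- in the sum over the two classes `1_A(u) 1_A(w) + 1_B(u) 1_B(w) = (1 + x_u x_w) / 2`
  have hE : ∀ B : Finset V, edgeCount G B = (∑ u, ∑ w, (if G.Adj u w then (1 : ℝ) else 0)
      * ((if u ∈ B then (1 : ℝ) else 0) * (if w ∈ B then (1 : ℝ) else 0))) / 2 := by
    intro B
    rw [edgeCount, ← Finset.sum_boole, ← Finset.univ_product_univ, Finset.sum_product]
    congr 1
    refine Finset.sum_congr rfl fun u _ => Finset.sum_congr rfl fun w _ => ?_
    by_cases h1 : G.Adj u w <;> by_cases h2 : u ∈ B <;> by_cases h3 : w ∈ B <;> simp [h1, h2, h3]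
  have hVol : ∀ B : Finset V, vol G B = ∑ v, (G.degree v : ℝ) * (if v ∈ B then (1 : ℝ) else 0) := by
    intro B
    simp [vol]
  set X := ∑ u, ∑ w, (if G.Adj u w then (1 : ℝ) else 0) * (x u * x w) with hX
  set D := ∑ v, (G.degree v : ℝ) * x v with hD
  have hEE : edgeCount G A + edgeCount G Aᶜ = (2 * m + X) / 4 := by
    rw [hE, hE, hmdef, ← sum_sum_adj, hX]
    simp_rw [iA, iB]
    rw [← add_div, ← Finset.sum_add_distrib, ← Finset.sum_add_distrib, div_eq_div_iff (by norm_num)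
      (by norm_num), Finset.sum_mul, Finset.sum_mul]
    refine Finset.sum_congr rfl fun u _ => ?_
    rw [← Finset.sum_add_distrib, ← Finset.sum_add_distrib, Finset.sum_mul, Finset.sum_mul]
    refine Finset.sum_congr rfl fun w _ => ?_
    ring
  have hVA : vol G A = m + D / 2 := by
    have : m + D / 2 = (2 * m + D) / 2 := by ring
    rw [this, hVol, hmdef, ← sum_degree_real, hD, ← Finset.sum_add_distrib, Finset.sum_div]
    refine Finset.sum_congr rfl fun v _ => ?_
    rw [iA]; ring
  have hVB : vol G Aᶜ = m - D / 2 := by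
    have : m - D / 2 = (2 * m - D) / 2 := by ring
    rw [this, hVol, hmdef, ← sum_degree_real, hD, ← Finset.sum_sub_distrib, Finset.sum_div]
    refine Finset.sum_congr rfl fun v _ => ?_
    rw [iB]; ring
  have hQ : quadOn (modMatrix G) Finset.univ x = X / 2 - D ^ 2 / (4 * m) := by
    rw [hX, hD, sq, Finset.sum_mul_sum, Finset.sum_div, Finset.sum_div, ← Finset.sum_sub_distrib]
    refine Finset.sum_congr rfl fun u _ => ?_
    rw [Finset.sum_div, Finset.sum_div, ← Finset.sum_sub_distrib]
    refine Finset.sum_congr rfl fun w _ => ?_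
    rw [modMatrix]; ring
  have hEB : edgeCount G Aᶜ = (2 * m + X) / 4 - edgeCount G A := by linarith
  simp only [hf]
  rw [hVA, hVB, hEB, hQ]
  field_simp
  ring

/-- The constant sign vector gives the partition with a single class, whose score is zero. -/
theorem zero_le_modularity (hm : 0 < (G.edgeFinset.card : ℝ)) : 0 ≤ modularity G := by
  refine le_trans (le_of_eq ?_) (quad_le_modularity G hm (x := fun _ => 1) fun _ => Or.inl rfl)
  have : quadOn (modMatrix G) Finset.univ (fun _ => 1) = 0 := by
    simp only [quadOn, mul_one, modMatrix, Finset.sum_sub_distrib, ← Finset.sum_div]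
    rw [sum_sum_adj, ← Finset.sum_mul_sum, sum_degree_real]
    field_simp
    ring
  rw [this, zero_div]

/-! ### High-degree vertices -/

/-- Pair the vertices of `S` consecutively by decreasing degree, with opposite signs in each pair. A pair
loses at most `1` through its edge, and the squared degree differences telescope below `M²`. The
quantity `M` bounds the degrees that remain, so that the induction can pass to `M = d_v` after
removing the two largest degrees `d_u ≥ d_v`. -/
theorem heavy_pairs (hm : 0 < (G.edgeFinset.card : ℝ)) :
    ∀ (k : ℕ) (S : Finset V), S.card = k → ∀ M : ℝ, 0 ≤ M → (∀ v ∈ S, (G.degree v : ℝ) ≤ M) →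
      ∃ x, IsSign x ∧ -(M ^ 2 / (4 * (G.edgeFinset.card : ℝ))) - (S.card : ℝ) / 2
        ≤ quadOn (modMatrix G) S x := by
  set m : ℝ := (G.edgeFinset.card : ℝ) with hmdef
  intro k
  induction k using Nat.strong_induction_on with
  | _ k ih =>
  intro S hSk M hM hSM
  rcases S.eq_empty_or_nonempty with rfl | hne
  · refine ⟨fun _ => 1, fun _ => Or.inl rfl, ?_⟩
    have : 0 ≤ M ^ 2 / (4 * m) := by positivity
    simp only [quadOn, Finset.sum_empty, Finset.card_empty]
    norm_num
    exact this
  obtain ⟨u, huS, hu⟩ := S.exists_max_image (fun v => G.degree v) hne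
  have huM := hSM u huS
  have hdu : (0 : ℝ) ≤ G.degree u := Nat.cast_nonneg _
  rcases (S.erase u).eq_empty_or_nonempty with he | hne'
  · refine ⟨fun _ => 1, fun _ => Or.inl rfl, ?_⟩
    have hS : S = {u} := by rw [← Finset.insert_erase huS, he]; rfl
    rw [hS]
    simp only [quadOn, Finset.sum_singleton, Finset.card_singleton, modMatrix, SimpleGraph.irrefl,
      if_false, mul_one]
    have : (G.degree u : ℝ) * G.degree u / (4 * m) ≤ M ^ 2 / (4 * m) := by
      gcongr
      nlinarith
    push_cast
    linarith
  obtain ⟨v, hvS, hv⟩ := (S.erase u).exists_max_image (fun v => G.degree v) hne'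
  have huv : v ≠ u := Finset.ne_of_mem_erase hvS
  have hvS' : v ∈ S := Finset.mem_of_mem_erase hvS
  have hduv : (G.degree v : ℝ) ≤ G.degree u := by exact_mod_cast hu v hvS'
  set R := (S.erase u).erase v with hR
  have hc1 : (S.erase u).card = S.card - 1 := Finset.card_erase_of_mem huS
  have hc2 : R.card = (S.erase u).card - 1 := Finset.card_erase_of_mem hvS
  have hpos : 0 < (S.erase u).card := hne'.card_pos
  have hcard : S.card = R.card + 2 := by omega
  obtain ⟨x, hx, hxR⟩ := ih R.card (by omega) R rfl (G.degree v) (Nat.cast_nonneg _)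
    (fun w hw => by exact_mod_cast hv w (Finset.mem_of_mem_erase hw))
  set z : V → ℝ := fun w => if w = u then 1 else -1 with hz
  have hzs : IsSign z := fun w => by by_cases h : w = u <;> simp [hz, h]
  have hdisj : Disjoint R {u, v} := by
    rw [Finset.disjoint_right]
    intro w hw
    rcases Finset.mem_insert.1 hw with rfl | hw
    · simp [hR]
    · rw [Finset.mem_singleton.1 hw]; simp [hR]
  obtain ⟨x', hx', hle⟩ := exists_sign_union (modMatrix G) hdisj hx hzs
  have hun : R ∪ {u, v} = S := by
    ext w
    simp only [hR, Finset.mem_union, Finset.mem_erase, Finset.mem_insert, Finset.mem_singleton]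
    constructor
    · rintro (h | rfl | rfl)
      · exact h.2.2
      · exact huS
      · exact hvS'
    · intro h
      by_cases h1 : w = u
      · exact Or.inr (Or.inl h1)
      · by_cases h2 : w = v
        · exact Or.inr (Or.inr h2)
        · exact Or.inl ⟨h2, h1, h⟩
  rw [hun] at hle
  refine ⟨x', hx', le_trans ?_ hle⟩
  have hT : quadOn (modMatrix G) {u, v} z
      = -(if G.Adj u v then 1 else 0) - ((G.degree u : ℝ) - G.degree v) ^ 2 / (4 * m) := by
    have zu : z u = 1 := if_pos rfl
    have zv : z v = -1 := if_neg huv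
    rw [quadOn, Finset.sum_pair huv.symm, Finset.sum_pair huv.symm, Finset.sum_pair huv.symm, zu, zv]
    rw [modMatrix, modMatrix, modMatrix, modMatrix, if_neg G.irrefl, if_neg G.irrefl,
      if_congr (G.adj_comm v u) rfl rfl]
    ring
  have hA : (if G.Adj u v then (1 : ℝ) else 0) ≤ 1 := by split_ifs <;> norm_num
  -- the telescoping step: `d_v² + (d_u - d_v)² ≤ d_u² ≤ M²` for `0 ≤ d_v ≤ d_u`
  have hsq : (G.degree v : ℝ) ^ 2 / (4 * m) + ((G.degree u : ℝ) - G.degree v) ^ 2 / (4 * m)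
      ≤ M ^ 2 / (4 * m) := by
    rw [← add_div]
    refine div_le_div_of_nonneg_right ?_ (by linarith : (0 : ℝ) ≤ 4 * m)
    have : (0 : ℝ) ≤ G.degree v := Nat.cast_nonneg _
    nlinarith
  rw [hT, hcard]
  push_cast
  linarith

/-- Vertices of degree above `√(2m)` are paired by `heavy_pairs`, at cost `1/2` per vertex, and the others
are rounded from `0`, at the cost of their diagonal term `d_v² / (4m)`. Either cost is at most
`d_v / (2√(2m))`, and the degrees sum to at most `2m`. -/
theorem heavy_bound (hm : 0 < (G.edgeFinset.card : ℝ)) (S : Finset V) :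
    ∃ x, IsSign x ∧ -((G.maxDegree : ℝ) ^ 2 / (4 * (G.edgeFinset.card : ℝ)))
        - Real.sqrt (2 * (G.edgeFinset.card : ℝ)) / 2 ≤ quadOn (modMatrix G) S x := by
  set m : ℝ := (G.edgeFinset.card : ℝ) with hmdef
  set r := Real.sqrt (2 * m) with hr
  have hr0 : 0 < r := Real.sqrt_pos.2 (by linarith)
  have hr2 : r * r = 2 * m := Real.mul_self_sqrt (by linarith)
  set S₁ := S.filter fun v => r < (G.degree v : ℝ) with hS₁
  set S₂ := S.filter fun v => ¬ r < (G.degree v : ℝ) with hS₂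
  obtain ⟨x, hx, hx1⟩ := heavy_pairs G hm S₁.card S₁ rfl G.maxDegree (Nat.cast_nonneg _)
    (fun v _ => by exact_mod_cast G.degree_le_maxDegree v)
  obtain ⟨z, hz, hz1⟩ := exists_sign_ge (modMatrix G) S₂ (fun _ => 0) (by simp)
  obtain ⟨x', hx', hle⟩ := exists_sign_union (modMatrix G)
    (Finset.disjoint_filter_filter_not S S fun v => r < (G.degree v : ℝ)) hx hz
  rw [Finset.filter_union_filter_not_eq] at hle
  refine ⟨x', hx', le_trans ?_ hle⟩
  have h1 : (S₁.card : ℝ) / 2 ≤ ∑ v ∈ S₁, (G.degree v : ℝ) / (2 * r) := by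
    rw [div_eq_mul_inv, ← nsmul_eq_mul, ← Finset.sum_const]
    refine Finset.sum_le_sum fun v hv => ?_
    have := (Finset.mem_filter.1 hv).2
    rw [le_div_iff₀ (by positivity)]
    linarith
  have h2 : -∑ v ∈ S₂, (G.degree v : ℝ) / (2 * r) ≤ quadOn (modMatrix G) S₂ z := by
    refine le_trans ?_ hz1
    rw [← Finset.sum_neg_distrib]
    refine Finset.sum_le_sum fun v hv => ?_
    have hd := not_lt.1 (Finset.mem_filter.1 hv).2
    have hd0 : (0 : ℝ) ≤ G.degree v := Nat.cast_nonneg _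
    have : ∑ w ∈ S₂, modMatrix G v w * (if v = w then 1 else (0 : ℝ) * 0) = modMatrix G v v := by
      simp [hv]
    rw [this, modMatrix, if_neg (G.irrefl)]
    have : (G.degree v : ℝ) * G.degree v / (4 * m) ≤ (G.degree v : ℝ) / (2 * r) := by
      have e : 4 * m = 2 * r * r := by linarith
      rw [e, div_le_div_iff₀ (by positivity) (by positivity)]
      have := mul_le_mul_of_nonneg_left hd (by positivity : 0 ≤ (G.degree v : ℝ) * (2 * r))
      nlinarith
    linarith
  have h3 : ∑ v ∈ S₁, (G.degree v : ℝ) / (2 * r) + ∑ v ∈ S₂, (G.degree v : ℝ) / (2 * r) ≤ r / 2 := by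
    rw [Finset.sum_filter_add_sum_filter_not, ← Finset.sum_div, div_le_div_iff₀ (by positivity)
      (by norm_num)]
    have : ∑ v ∈ S, (G.degree v : ℝ) ≤ 2 * m := by
      rw [← sum_degree_real]
      exact Finset.sum_le_univ_sum_of_nonneg fun _ => Nat.cast_nonneg _
    nlinarith
  linarith

/-! ### Low-degree vertices -/

/-- The coordinate `i` of the vector `(e_u + d'_u ^ (-1/2) ∑_{w ∈ N_L(u)} e_w) / √2` attached to `u`,
where `N_L(u)` is the set of neighbours of `u` in `L` and `d'_u` its cardinality. -/
noncomputable def corrVec (L : Finset V) (u i : V) : ℝ :=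
  1 / Real.sqrt 2 * ((if i = u then 1 else 0)
    + (if i ∈ L.filter (fun w => G.Adj u w) then
        1 / Real.sqrt ((L.filter fun w => G.Adj u w).card) else 0))

theorem corrVec_nonneg (L : Finset V) (u i : V) : 0 ≤ corrVec G L u i := by
  unfold corrVec
  positivity

/-- The sum equals `1`, or `1/2` when `u` has no neighbour in `L`. -/
theorem sum_corrVec_sq (L : Finset V) (u : V) : ∑ i, corrVec G L u i ^ 2 ≤ 1 := by
  set N := L.filter (fun w => G.Adj u w) with hN
  have hu : u ∉ N := by simp [hN]
  have h : ∀ i, corrVec G L u i ^ 2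
      = ((if i = u then 1 else 0) + (if i ∈ N then 1 / (N.card : ℝ) else 0)) / 2 := by
    intro i
    have h2 : (1 / Real.sqrt 2) ^ 2 = 1 / 2 := by
      rw [div_pow, Real.sq_sqrt (by norm_num)]; norm_num
    rw [corrVec, ← hN, mul_pow, h2]
    by_cases hi : i = u
    · subst hi; simp [hu]
    · by_cases hi' : i ∈ N
      · simp only [hi, hi', if_true, if_false, zero_add, div_pow, one_pow]
        rw [Real.sq_sqrt (Nat.cast_nonneg _)]; ring
      · simp [hi, hi']
  simp_rw [h]
  rw [← Finset.sum_div, Finset.sum_add_distrib, Finset.sum_ite_eq' Finset.univ u,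
    if_pos (Finset.mem_univ u), Finset.sum_ite_mem, Finset.univ_inter, Finset.sum_const, nsmul_eq_mul]
  have : (N.card : ℝ) * (1 / (N.card : ℝ)) ≤ 1 := by
    rw [mul_one_div]; exact div_self_le_one _
  linarith

/-- The coordinates `u` and `w` alone account for this; the other coordinates contribute a nonnegative
amount. -/
theorem corrVec_inner_adj (L : Finset V) {u w : V} (hu : u ∈ L) (hw : w ∈ L) (h : G.Adj u w) :
    (1 / Real.sqrt ((L.filter fun v => G.Adj u v).card)
      + 1 / Real.sqrt ((L.filter fun v => G.Adj w v).card)) / 2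
      ≤ ∑ i, corrVec G L u i * corrVec G L w i := by
  have hne : u ≠ w := h.ne
  have hpair : ∑ i ∈ ({u, w} : Finset V), corrVec G L u i * corrVec G L w i
      ≤ ∑ i, corrVec G L u i * corrVec G L w i :=
    Finset.sum_le_univ_sum_of_nonneg fun i =>
      mul_nonneg (corrVec_nonneg G L u i) (corrVec_nonneg G L w i)
  refine le_trans (le_of_eq ?_) hpair
  have h2 : (1 / Real.sqrt 2) * (1 / Real.sqrt 2) = 1 / 2 := by
    rw [div_mul_div_comm, Real.mul_self_sqrt (by norm_num)]; norm_num
  rw [Finset.sum_pair hne]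
  have m1 : u ∈ L.filter (fun v => G.Adj w v) := Finset.mem_filter.2 ⟨hu, h.symm⟩
  have m2 : w ∈ L.filter (fun v => G.Adj u v) := Finset.mem_filter.2 ⟨hw, h⟩
  have m3 : u ∉ L.filter (fun v => G.Adj u v) := by simp
  have m4 : w ∉ L.filter (fun v => G.Adj w v) := by simp
  simp only [corrVec, if_pos m1, if_pos m2, if_neg m3, if_neg m4, if_true, if_neg hne,
    if_neg hne.symm]
  linear_combination (-(1 / Real.sqrt ((L.filter fun v => G.Adj u v).card : ℝ)
    + 1 / Real.sqrt ((L.filter fun v => G.Adj w v).card : ℝ))) * h2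

/-- The second moment of the values at `u` and `w`, except that the diagonal is set to `1`: the entry
it will have once the values are rounded to signs. -/
noncomputable def corr (L : Finset V) (u w : V) : ℝ :=
  if u = w then 1 else
    ∫ g, wave (∑ i, corrVec G L u i * g i) * wave (∑ i, corrVec G L w i * g i) ∂(stdGauss V)

theorem corr_le_one (L : Finset V) (u w : V) : corr G L u w ≤ 1 := by
  unfold corr
  split_ifs
  · exact le_rfl
  · exact wave_corr_le_one _ _

theorem corr_nonneg (L : Finset V) (u w : V) : 0 ≤ corr G L u w := by
  unfold corr
  split_ifs
  · exact zero_le_one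
  · have h : 0 ≤ ∑ i, corrVec G L u i * corrVec G L w i := Finset.sum_nonneg fun i _ =>
      mul_nonneg (corrVec_nonneg G L u i) (corrVec_nonneg G L w i)
    exact le_trans (by positivity)
      (wave_corr_ge _ _ (sum_corrVec_sq G L u) (sum_corrVec_sq G L w) h)

/-- Vertices of `L` with nonzero correlation are at distance at most two in the subgraph induced on `L`,
since otherwise their vectors have disjoint supports. -/
theorem card_corr_ne_zero (L : Finset V) (K : ℝ) (hK : 1 ≤ K)
    (hLK : ∀ u ∈ L, ((L.filter fun v => G.Adj u v).card : ℝ) ≤ K) (u : V) (hu : u ∈ L) :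
    ((L.filter fun w => corr G L u w ≠ 0).card : ℝ) ≤ K + K ^ 2 := by
  set N : V → Finset V := fun u => L.filter fun v => G.Adj u v with hN
  have hmem : ∀ v i, corrVec G L v i ≠ 0 → i = v ∨ i ∈ N v := by
    intro v i h
    by_contra hcon
    push Not at hcon
    apply h
    have h2 : i ∉ L.filter (fun w => G.Adj v w) := hcon.2
    rw [corrVec, if_neg hcon.1, if_neg h2]
    simp
  have hnear : ∀ w ∈ L, corr G L u w ≠ 0 → w = u ∨ w ∈ N u ∪ (N u).biUnion N := by
    intro w hw h
    by_cases huw : u = w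
    · exact Or.inl huw.symm
    rw [corr, if_neg huw] at h
    have h0 : ∑ i, corrVec G L u i * corrVec G L w i ≠ 0 := fun h0 => h (wave_corr_zero _ _ h0)
    obtain ⟨i, -, hi⟩ := Finset.exists_ne_zero_of_sum_ne_zero h0
    have h1 := hmem u i (left_ne_zero_of_mul hi)
    have h2 := hmem w i (right_ne_zero_of_mul hi)
    right
    rw [Finset.mem_union, Finset.mem_biUnion]
    rcases h2 with rfl | h2
    · exact Or.inl (h1.resolve_left (Ne.symm huw))
    · have hwi : w ∈ N i := Finset.mem_filter.2 ⟨hw, (Finset.mem_filter.1 h2).2.symm⟩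
      rcases h1 with rfl | h1
      · exact Or.inl hwi
      · exact Or.inr ⟨i, h1, hwi⟩
  -- if `N u` is nonempty then `u` itself lies in `⋃ N i`, which saves counting it separately
  rcases (N u).eq_empty_or_nonempty with he | ⟨i, hi⟩
  · have hsub : (L.filter fun w => corr G L u w ≠ 0) ⊆ {u} := by
      intro w hw
      have := hnear w (Finset.mem_filter.1 hw).1 (Finset.mem_filter.1 hw).2
      simpa [he] using this
    have := Finset.card_le_card hsub
    rw [Finset.card_singleton] at this
    have h1 : ((L.filter fun w => corr G L u w ≠ 0).card : ℝ) ≤ 1 := by exact_mod_cast this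
    nlinarith
  · have hsub : (L.filter fun w => corr G L u w ≠ 0) ⊆ N u ∪ (N u).biUnion N := by
      intro w hw
      rcases hnear w (Finset.mem_filter.1 hw).1 (Finset.mem_filter.1 hw).2 with rfl | h
      · rw [Finset.mem_union, Finset.mem_biUnion]
        exact Or.inr ⟨i, hi, Finset.mem_filter.2 ⟨hu, (Finset.mem_filter.1 hi).2.symm⟩⟩
      · exact h
    have h1 : ((L.filter fun w => corr G L u w ≠ 0).card : ℝ)
        ≤ (N u).card + ∑ i ∈ N u, ((N i).card : ℝ) := by
      have := (Finset.card_le_card hsub).trans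
        ((Finset.card_union_le _ _).trans (Nat.add_le_add_left Finset.card_biUnion_le _))
      exact_mod_cast this
    have h2 : ∑ i ∈ N u, ((N i).card : ℝ) ≤ (N u).card * K := by
      rw [← nsmul_eq_mul]
      exact Finset.sum_le_card_nsmul _ _ _ fun i hi => hLK i (Finset.mem_filter.1 hi).1
    have h3 : ((N u).card : ℝ) ≤ K := hLK u hu
    nlinarith

/-- Some outcome of the random values is at least as good as their mean, and rounding it to signs
loses nothing. -/
theorem low_bound (hm : 0 < (G.edgeFinset.card : ℝ)) (L : Finset V) (K : ℝ) (hK : 1 ≤ K)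
    (hLK : ∀ u ∈ L, (G.degree u : ℝ) ≤ K) :
    ∃ x, IsSign x ∧ 3 / (8 * Real.sqrt 2)
        * ∑ v ∈ L, Real.sqrt ((L.filter fun u => G.Adj v u).card) - K * (K + K ^ 2) / 2
      ≤ quadOn (modMatrix G) L x := by
  set m : ℝ := (G.edgeFinset.card : ℝ) with hmdef
  set d : V → ℝ := fun u => ((L.filter fun v => G.Adj u v).card : ℝ) with hd
  have hdeg : ∀ u ∈ L, d u ≤ K := by
    intro u hu
    refine le_trans ?_ (hLK u hu)
    have : (L.filter fun v => G.Adj u v).card ≤ G.degree u := by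
      rw [← SimpleGraph.card_neighborFinset_eq_degree]
      refine Finset.card_le_card fun w hw => ?_
      rw [SimpleGraph.mem_neighborFinset]
      exact (Finset.mem_filter.1 hw).2
    exact Nat.cast_le.2 this
  -- the random vector of correlated values in `[-1, 1]`
  set y : (V → ℝ) → V → ℝ := fun g u => wave (∑ i, corrVec G L u i * g i) with hy
  set f : (V → ℝ) → ℝ := fun g => ∑ u ∈ L, ∑ w ∈ L,
    modMatrix G u w * (if u = w then 1 else y g u * y g w) with hf
  have hint : ∀ u w, Integrable (fun g => modMatrix G u w * (if u = w then 1 else y g u * y g w))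
      (stdGauss V) := by
    intro u w
    refine Integrable.const_mul ?_ _
    split_ifs
    · exact integrable_const _
    · exact integrable_wave_mul_wave _ _
  have hmean : ∫ g, f g ∂(stdGauss V) = ∑ u ∈ L, ∑ w ∈ L, modMatrix G u w * corr G L u w := by
    rw [integral_finsetSum _ fun u _ => integrable_finsetSum _ fun w _ => hint u w]
    refine Finset.sum_congr rfl fun u _ => ?_
    rw [integral_finsetSum _ fun w _ => hint u w]
    refine Finset.sum_congr rfl fun w _ => ?_
    rw [integral_const_mul, corr]
    split_ifs
    · simp
    · rfl
  obtain ⟨g, hg⟩ := exists_integral_le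
    (integrable_finsetSum L fun u _ => integrable_finsetSum L fun w _ => hint u w)
  obtain ⟨x, hx, hxg⟩ := exists_sign_ge (modMatrix G) L (y g) fun v => abs_wave_le _
  refine ⟨x, hx, le_trans ?_ (hg.trans hxg)⟩
  refine le_trans ?_ hmean.ge
  set lam : ℝ := 3 / (4 * Real.sqrt 2) with hlam
  have hlam0 : 0 ≤ lam := by positivity
  -- the sum of `d'_u ^ (-1/2)` over pairs `u ~ w` is `∑ √d'_u`, and likewise for `d'_w ^ (-1/2)`
  have hE : lam / 2 * ∑ u ∈ L, Real.sqrt (d u)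
      ≤ ∑ u ∈ L, ∑ w ∈ L, (if G.Adj u w then (1 : ℝ) else 0) / 2 * corr G L u w := by
    have hS : ∀ u, ∑ w ∈ L, (if G.Adj u w then 1 / Real.sqrt (d u) else 0) = Real.sqrt (d u) := by
      intro u
      rw [← Finset.sum_filter, Finset.sum_const, nsmul_eq_mul, mul_one_div]
      exact Real.div_sqrt
    have hS1 : ∑ u ∈ L, ∑ w ∈ L, (if G.Adj u w then 1 / Real.sqrt (d u) else 0)
        = ∑ u ∈ L, Real.sqrt (d u) := Finset.sum_congr rfl fun u _ => hS u
    have hS2 : ∑ u ∈ L, ∑ w ∈ L, (if G.Adj u w then 1 / Real.sqrt (d w) else 0)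
        = ∑ u ∈ L, Real.sqrt (d u) := by
      rw [Finset.sum_comm, ← hS1]
      refine Finset.sum_congr rfl fun u _ => Finset.sum_congr rfl fun w _ => ?_
      rw [if_congr (G.adj_comm w u) rfl rfl]
    have : lam / 2 * ∑ u ∈ L, Real.sqrt (d u) = ∑ u ∈ L, ∑ w ∈ L, lam / 4 *
        ((if G.Adj u w then 1 / Real.sqrt (d u) else 0)
          + (if G.Adj u w then 1 / Real.sqrt (d w) else 0)) := by
      simp_rw [← Finset.mul_sum, Finset.sum_add_distrib]
      rw [hS1, hS2]
      ring
    rw [this]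
    refine Finset.sum_le_sum fun u hu => Finset.sum_le_sum fun w hw => ?_
    by_cases h : G.Adj u w
    · have h1 := corrVec_inner_adj G L hu hw h
      have h0 : 0 ≤ ∑ i, corrVec G L u i * corrVec G L w i := Finset.sum_nonneg fun i _ =>
        mul_nonneg (corrVec_nonneg G L u i) (corrVec_nonneg G L w i)
      have h2 := wave_corr_ge _ _ (sum_corrVec_sq G L u) (sum_corrVec_sq G L w) h0
      have h3 := mul_le_mul_of_nonneg_left h1 hlam0
      rw [corr, if_neg h.ne]
      simp only [if_pos h]
      linarith
    · simp [h]
  have hD : ∑ u ∈ L, ∑ w ∈ L, (G.degree u : ℝ) * (G.degree w : ℝ) / (4 * m) * corr G L u w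
      ≤ K * (K + K ^ 2) / 2 := by
    have hrow : ∀ u ∈ L, ∑ w ∈ L, (G.degree w : ℝ) * corr G L u w ≤ K * (K + K ^ 2) := by
      intro u hu
      calc ∑ w ∈ L, (G.degree w : ℝ) * corr G L u w
          ≤ ∑ w ∈ L, (if corr G L u w ≠ 0 then K else 0) := by
            refine Finset.sum_le_sum fun w hw => ?_
            split_ifs with h
            · have := mul_le_mul (hLK w hw) (corr_le_one G L u w) (corr_nonneg G L u w)
                (by linarith)
              linarith
            · rw [not_not.1 h, mul_zero]
        _ = (L.filter fun w => corr G L u w ≠ 0).card * K := by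
            rw [← Finset.sum_filter, Finset.sum_const, nsmul_eq_mul]
        _ ≤ (K + K ^ 2) * K := by
            have := card_corr_ne_zero G L K hK hdeg u hu
            gcongr
        _ = _ := by ring
    have hsum : ∑ u ∈ L, (G.degree u : ℝ) ≤ 2 * m := by
      rw [hmdef, ← sum_degree_real]
      exact Finset.sum_le_univ_sum_of_nonneg fun _ => Nat.cast_nonneg _
    calc ∑ u ∈ L, ∑ w ∈ L, (G.degree u : ℝ) * (G.degree w : ℝ) / (4 * m) * corr G L u w
        = ∑ u ∈ L, (G.degree u : ℝ) / (4 * m) * ∑ w ∈ L, (G.degree w : ℝ) * corr G L u w := by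
          refine Finset.sum_congr rfl fun u _ => ?_
          rw [Finset.mul_sum]
          refine Finset.sum_congr rfl fun w _ => ?_
          ring
      _ ≤ ∑ u ∈ L, (G.degree u : ℝ) / (4 * m) * (K * (K + K ^ 2)) := by
          refine Finset.sum_le_sum fun u hu => ?_
          have := hrow u hu
          gcongr
      _ = (∑ u ∈ L, (G.degree u : ℝ)) / (4 * m) * (K * (K + K ^ 2)) := by
          rw [← Finset.sum_mul, Finset.sum_div]
      _ ≤ (2 * m) / (4 * m) * (K * (K + K ^ 2)) := by gcongr
      _ = _ := by field_simp; ring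
  have hsplit : ∑ u ∈ L, ∑ w ∈ L, modMatrix G u w * corr G L u w
      = ∑ u ∈ L, ∑ w ∈ L, (if G.Adj u w then (1 : ℝ) else 0) / 2 * corr G L u w
        - ∑ u ∈ L, ∑ w ∈ L, (G.degree u : ℝ) * (G.degree w : ℝ) / (4 * m) * corr G L u w := by
    rw [← Finset.sum_sub_distrib]
    refine Finset.sum_congr rfl fun u _ => ?_
    rw [← Finset.sum_sub_distrib]
    refine Finset.sum_congr rfl fun w _ => ?_
    rw [modMatrix]; ring
  have hc : (3 / (8 * Real.sqrt 2) : ℝ) = lam / 2 := by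
    rw [hlam]; field_simp; norm_num
  rw [hsplit, hc]
  linarith

end

/-! ### Conclusion -/

/-- Lower bound on modularity in terms of the degrees inside the induced subgraph on the
low-degree vertices `L`; here `d_v' = |{u ∈ L : G.Adj v u}|` is the degree of `v` in `G[L]`. -/
theorem modularity_lower_bound_removed_degrees
    {V : Type*} [Fintype V] [DecidableEq V] (G : SimpleGraph V) [DecidableRel G.Adj]
    (n : ℕ) (hn : n = Fintype.card V)
    (dbar : ℝ) (hdbar : dbar = 2 * (G.edgeFinset.card : ℝ) / n) (hd1 : 1 ≤ dbar)
    (C : ℝ) (hC : 2 ≤ C)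
    (L : Finset V) (hL : L = Finset.univ.filter (fun v => (G.degree v : ℝ) < C * dbar))
    (ϑ : ℝ) (hϑ : ϑ = (C * dbar) ^ 10 / (n : ℝ)) (hϑ1 : ϑ < 1) :
    modularity G ≥
      ((3 / (8 * Real.sqrt 2)) / (2 * n * dbar))
          * ∑ v ∈ L, Real.sqrt ((L.filter (fun u => G.Adj v u)).card)
        - ϑ ^ 2 / (2 * dbar ^ 2) - 3 / (8 * Real.sqrt n)
        - (G.maxDegree : ℝ) ^ 2 / (4 * ((n : ℝ) * dbar) ^ 2) := by
  have hn0 : (0 : ℝ) < n := by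
    rcases Nat.eq_zero_or_pos n with h | h
    · subst h
      rw [hdbar] at hd1
      norm_num at hd1
    · exact_mod_cast h
  have hnd : 2 * (G.edgeFinset.card : ℝ) = n * dbar := by
    rw [hdbar]; field_simp
  have hnd0 : 0 < (n : ℝ) * dbar := by positivity
  have hm : 0 < (G.edgeFinset.card : ℝ) := by linarith
  set K := C * dbar with hKdef
  have hK : 2 ≤ K := by nlinarith
  set r := Real.sqrt n with hr
  have hr0 : 0 < r := Real.sqrt_pos.2 hn0
  have hr2 : r ^ 2 = n := Real.sq_sqrt hn0.le
  have hKr : K ^ 5 ≤ r := by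
    rw [hϑ, div_lt_one hn0, ← hr2] at hϑ1
    have : (K ^ 5) ^ 2 ≤ r ^ 2 := by rw [← pow_mul]; exact hϑ1.le
    exact (pow_le_pow_iff_left₀ (by positivity) hr0.le (by norm_num)).1 this
  obtain ⟨x, hx, hxL⟩ := low_bound G hm L K (by linarith) (fun u hu => by
    rw [hL] at hu; exact (Finset.mem_filter.1 hu).2.le)
  obtain ⟨z, hz, hzH⟩ := heavy_bound G hm Lᶜ
  obtain ⟨x', hx', hle⟩ := exists_sign_union (modMatrix G) (disjoint_compl_right (a := L)) hx hz
  rw [Finset.union_compl] at hle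
  have hq := quad_le_modularity G hm hx'
  have hq0 := zero_le_modularity G hm
  set sumSqrt := ∑ v ∈ L, Real.sqrt ((L.filter (fun u => G.Adj v u)).card)
    with hsum
  set c : ℝ := 3 / (8 * Real.sqrt 2) with hc
  have h4m : 4 * (G.edgeFinset.card : ℝ) = 2 * (n * dbar) := by linarith
  rw [hnd] at hq hzH
  rw [h4m] at hzH
  have hD : Real.sqrt ((n : ℝ) * dbar) ≤ dbar * r := by
    refine Real.sqrt_le_iff.2 ⟨by positivity, ?_⟩
    rw [mul_pow, hr2]
    nlinarith [mul_le_mul_of_nonneg_left hd1 hnd0.le]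
  -- `2 (K² + K³) ≤ K⁵` for `K ≥ 2`
  have hKK : K * (K + K ^ 2) / 2 ≤ r / 4 := by
    refine le_trans ?_ (div_le_div_of_nonneg_right hKr (by norm_num : (0 : ℝ) ≤ 4))
    have e : K ^ 5 / 4 - K * (K + K ^ 2) / 2
        = K ^ 2 / 4 * ((K - 2) * (K ^ 2 + 2 * K + 2) + 2) := by ring
    have h2 : 0 ≤ K - 2 := by linarith
    have : 0 ≤ K ^ 2 / 4 * ((K - 2) * (K ^ 2 + 2 * K + 2) + 2) := by positivity
    linarith
  have hrd : r ≤ dbar * r := by nlinarith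
  have hmain : (c * sumSqrt - 3 / 4 * (dbar * r) - (G.maxDegree : ℝ) ^ 2 / (2 * (n * dbar)))
      / (n * dbar) ≤ modularity G := by
    refine le_trans ?_ hq
    gcongr
    linarith
  have e1 : (c * sumSqrt - 3 / 4 * (dbar * r) - (G.maxDegree : ℝ) ^ 2 / (2 * (n * dbar))) / (n * dbar)
      = 2 * (c / (2 * n * dbar) * sumSqrt - 3 / (8 * r)
        - (G.maxDegree : ℝ) ^ 2 / (4 * ((n : ℝ) * dbar) ^ 2)) := by
    have hd0 : 0 < dbar := by linarith
    rw [← hr2]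
    field_simp
    ring
  have hϑ2 : 0 ≤ ϑ ^ 2 / (2 * dbar ^ 2) := by positivity
  rw [e1] at hmain
  -- a nonnegative number that is at least `2 T` is at least `T`, whatever the sign of `T`
  linarith
end
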